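/- arXiv:1907.00885 — 2 statements merged into one kernel-verified Lean document; each statement's English description precedes it below -/
import Mathlib

section
/- Let b ≥ 2 and k > 2b be integers and let 𝒜 = {A_1, …, A_n} be a finite family of subsets of ℝ² satisfying: (i) f_{k+1}(𝒜) = 0, and (ii) for every σ ⊆ {1, …, n} with |σ| ∈ {k, k+1}, the set A_σ is open (possibly empty) and has at most b path-connected components. Then f_k(𝒜) ≤ (b/(k−2b)) · f^{ind}_{k-1}(𝒜). -/
/-- `fNum A k` is `f_k(𝒜)`: the number of subsets `σ` of the index set with
`|σ| = k+1` such that `⋂ i ∈ σ, A i` is nonempty. -/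
noncomputable def fNum {α : Type*} {n : ℕ} (A : Fin n → Set α) (k : ℕ) : ℕ :=
  Nat.card {σ : Finset (Fin n) // σ.card = k + 1 ∧ (⋂ i ∈ σ, A i).Nonempty}

/-- `fInd A k` is `f_k^{ind}(𝒜)`: the number of subsets `τ` with `|τ| = k+1` and
`⋂ i ∈ τ, A i ≠ ∅` for which there is `σ ⊃ τ` with `|σ| = k+2` and `⋂ i ∈ σ, A i ≠ ∅`. -/
noncomputable def fInd {α : Type*} {n : ℕ} (A : Fin n → Set α) (k : ℕ) : ℕ :=
  Nat.card {τ : Finset (Fin n) // τ.card = k + 1 ∧ (⋂ i ∈ τ, A i).Nonempty ∧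
    ∃ σ : Finset (Fin n), τ ⊂ σ ∧ σ.card = k + 2 ∧ (⋂ i ∈ σ, A i).Nonempty}

/-- A set `S` has at most `b` path-connected components: there are `b` points such that
every point of `S` can be joined inside `S` to one of them. -/
def AtMostComponents {X : Type*} [TopologicalSpace X] (b : ℕ) (S : Set X) : Prop :=
  ∃ g : Fin b → X, ∀ x ∈ S, ∃ j : Fin b, JoinedIn S x (g j)


namespace PlanarAux

/-- grid edges: `(z,false)` goes from `z` to `z+(1,0)`, `(z,true)` from `z` to `z+(0,1)`. -/
abbrev GE := (ℤ × ℤ) × Bool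

def gtail (e : GE) : ℤ × ℤ := e.1
def ghead (e : GE) : ℤ × ℤ := if e.2 then (e.1.1, e.1.2 + 1) else (e.1.1 + 1, e.1.2)
/-- the two faces at an edge -/
def gl (e : GE) : ℤ × ℤ := e.1
def gr (e : GE) : ℤ × ℤ := if e.2 then (e.1.1 - 1, e.1.2) else (e.1.1, e.1.2 - 1)

def GAdj (a b : ℤ × ℤ) : Prop :=
  ∃ e : GE, (gtail e = a ∧ ghead e = b) ∨ (gtail e = b ∧ ghead e = a)

/-- boundary of a 1-chain -/
def bd (y : GE → ZMod 2) (z : ℤ × ℤ) : ZMod 2 :=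
  y (z, false) + y (z, true) + y ((z.1 - 1, z.2), false) + y ((z.1, z.2 - 1), true)

def GConn {P : Type*} (R : P → P → Prop) (B : Set P) : Prop :=
  ∀ S ⊆ B, S.Nonempty → (∀ a ∈ S, ∀ b ∈ B, R a b → b ∈ S) → B ⊆ S

lemma z2_add_self (a : ZMod 2) : a + a = 0 := CharTwo.add_self_eq_zero a

lemma bd_add (x y : GE → ZMod 2) : bd (x + y) = bd x + bd y := by
  funext z; simp only [bd, Pi.add_apply]; ring

lemma bd_smul (c : ZMod 2) (y : GE → ZMod 2) : bd (c • y) = c • bd y := by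
  funext z; simp only [bd, Pi.smul_apply, smul_eq_mul]; ring

lemma bd_zero : bd 0 = 0 := by
  funext z; simp [bd]

lemma bd_sum {ι : Type*} (s : Finset ι) (y : ι → GE → ZMod 2) :
    bd (∑ i ∈ s, y i) = ∑ i ∈ s, bd (y i) := by
  classical
  induction s using Finset.induction_on with
  | empty => simp [bd_zero]
  | insert a s ha ih => rw [Finset.sum_insert ha, Finset.sum_insert ha, bd_add, ih]

lemma bd_single (e : GE) :
    bd (Pi.single e 1) = Pi.single (gtail e) 1 + Pi.single (ghead e) 1 := by
  funext z
  obtain ⟨⟨i, j⟩, c⟩ := e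
  obtain ⟨a, b⟩ := z
  cases c
  · simp only [bd, gtail, ghead, Pi.single_apply, Pi.add_apply, Prod.mk.injEq]
    simp
    congr 1
    apply propext
    constructor <;> rintro ⟨h1, h2⟩ <;> constructor <;> omega
  · simp only [bd, gtail, ghead, Pi.single_apply, Pi.add_apply, Prod.mk.injEq]
    simp
    congr 1
    apply propext
    constructor <;> rintro ⟨h1, h2⟩ <;> constructor <;> omega

lemma bd_cob (f : ℤ × ℤ → ZMod 2) : bd (fun e => f (gl e) + f (gr e)) = 0 := by
  funext z
  obtain ⟨i, j⟩ := z
  simp only [bd, gl, gr, Pi.zero_apply]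
  simp
  generalize f (i, j) = a
  generalize f (i, j - 1) = b
  generalize f (i - 1, j) = c
  generalize f (i - 1, j - 1) = d
  revert a b c d
  decide

/-- cycles bound -/
lemma cycle_bounds (y : GE → ZMod 2) (hfin : {e | y e ≠ 0}.Finite) (hy : bd y = 0) :
    ∃ f : ℤ × ℤ → ZMod 2, ∀ e, y e = f (gl e) + f (gr e) := by
  obtain ⟨N, hN⟩ : ∃ N : ℤ, ∀ e : GE, e.1.1 < N → y e = 0 := by
    obtain ⟨N, hN⟩ := (hfin.image (fun e => e.1.1)).bddBelow
    refine ⟨N, fun e he => ?_⟩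
    by_contra h
    have := hN ⟨e, h, rfl⟩
    simp only at this
    omega
  let f : ℤ × ℤ → ZMod 2 := fun z => ∑ m ∈ Finset.Icc N z.1, y ((m, z.2), true)
  have hstep : ∀ i j, f (i, j) = f (i - 1, j) + y ((i, j), true) := by
    intro i j
    by_cases h : N ≤ i
    · simp only [f]
      have : Finset.Icc N i = insert i (Finset.Icc N (i - 1)) := by
        ext m; simp only [Finset.mem_Icc, Finset.mem_insert]; omega
      rw [this, Finset.sum_insert (by simp), add_comm]
    · simp only [f]
      rw [hN ((i, j), true) (by simpa using h), Finset.Icc_eq_empty h, Finset.Icc_eq_empty (by omega)]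
      simp
  have hhor : ∀ j : ℤ, ∀ t : ℕ, f (N - 1 + t, j) + f (N - 1 + t, j - 1) + y ((N - 1 + t, j), false) = 0 := by
    intro j t
    induction t with
    | zero =>
      rw [hN ((N - 1 + (0:ℕ), j), false) (by simp)]
      simp [f]
    | succ t ih =>
      have h1 := hstep (N - 1 + (t + 1 : ℕ)) j
      have h2 := hstep (N - 1 + (t + 1 : ℕ)) (j - 1)
      have h3 := congrFun hy (N - 1 + (t + 1 : ℕ), j)
      have e1 : N - 1 + ((t + 1 : ℕ) : ℤ) - 1 = N - 1 + t := by push_cast; ring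
      simp only [bd, e1, Pi.zero_apply] at h1 h2 h3
      rw [h1, h2]
      revert ih h3
      generalize f (N - 1 + t, j) = a
      generalize f (N - 1 + t, j - 1) = b
      generalize y ((N - 1 + t, j), false) = c
      generalize y ((N - 1 + (t + 1 : ℕ), j), false) = d
      generalize y ((N - 1 + (t + 1 : ℕ), j), true) = u
      generalize y ((N - 1 + (t + 1 : ℕ), j - 1), true) = v
      revert a b c d u v
      decide
  refine ⟨f, ?_⟩
  rintro ⟨⟨i, j⟩, c⟩
  cases c
  · simp only [gl, gr]
    simp only [Bool.false_eq_true, if_false]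
    by_cases h : N ≤ i
    · have := hhor j (i - (N - 1)).toNat
      rw [Int.toNat_of_nonneg (by omega)] at this
      simp only [add_sub_cancel] at this
      revert this
      generalize f (i, j) = a
      generalize f (i, j - 1) = b
      generalize y ((i, j), false) = c
      revert a b c
      decide
    · rw [hN ((i, j), false) (by simpa using h)]
      simp only [f]
      rw [Finset.Icc_eq_empty h]; simp
  · simp only [gl, gr, if_true]
    rw [hstep i j]
    generalize f (i - 1, j) = a
    generalize y ((i, j), true) = c
    revert a c
    decide

lemma conn_chain {B : Set (ℤ × ℤ)} (hB : GConn GAdj B) {r z : ℤ × ℤ} (hr : r ∈ B) (hz : z ∈ B) :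
    ∃ y : GE → ZMod 2, {e | y e ≠ 0}.Finite ∧ (∀ e, y e ≠ 0 → gtail e ∈ B ∧ ghead e ∈ B) ∧
      bd y = Pi.single z 1 + Pi.single r 1 := by
  classical
  let S : Set (ℤ × ℤ) := {z | z ∈ B ∧ ∃ y : GE → ZMod 2, {e | y e ≠ 0}.Finite ∧
    (∀ e, y e ≠ 0 → gtail e ∈ B ∧ ghead e ∈ B) ∧ bd y = Pi.single z 1 + Pi.single r 1}
  suffices h : B ⊆ S from (h hz).2
  apply hB S (fun _ h => h.1)
  · refine ⟨r, hr, 0, by simp, by simp, ?_⟩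
    rw [bd_zero]; funext a
    simp [z2_add_self]
  · rintro a ⟨ha, y, hy1, hy2, hy3⟩ b hb ⟨e, he⟩
    refine ⟨hb, y + Pi.single e 1, ?_, ?_, ?_⟩
    · apply (hy1.union (Set.finite_singleton e)).subset
      intro e' he'
      by_cases h : e' = e
      · right; exact h
      · left; simpa [Pi.single_apply, h] using he'
    · intro e' he'
      by_cases h : e' = e
      · subst h
        rcases he with ⟨rfl, rfl⟩ | ⟨rfl, rfl⟩ <;> simp [ha, hb]
      · apply hy2; simpa [Pi.single_apply, h] using he'
    · rw [bd_add, hy3, bd_single]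
      have key : ∀ (p q s : ℤ × ℤ → ZMod 2), p + q + (p + s) = s + q := by
        intro p q s; funext w; simp only [Pi.add_apply]
        generalize p w = a; generalize q w = b; generalize s w = c
        revert a b c; decide
      rcases he with ⟨rfl, rfl⟩ | ⟨rfl, rfl⟩
      · exact key _ _ _
      · rw [add_comm (Pi.single (gtail e) 1) (Pi.single (ghead e) 1)]; exact key _ _ _

section minor
set_option linter.unusedSectionVars false
variable {V ι : Type*} [Fintype V] [Fintype ι] [DecidableEq V] [DecidableEq ι]

def bdH (u v : ι → V) : (ι → ZMod 2) →ₗ[ZMod 2] (V → ZMod 2) :=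
  Fintype.linearCombination (ZMod 2) (fun i => Pi.single (u i) (1 : ZMod 2) + Pi.single (v i) 1)

lemma bdH_apply (u v : ι → V) (h : ι → ZMod 2) (w : V) :
    bdH u v h w = ∑ i, h i * ((if w = u i then 1 else 0) + (if w = v i then 1 else 0)) := by
  simp [bdH, Fintype.linearCombination_apply, Finset.sum_apply, Pi.single_apply, mul_add]

lemma weight_three (u v : ι → V) (huv : ∀ i, u i ≠ v i)
    (hinj : ∀ i j, s(u i, v i) = s(u j, v j) → i = j) (h : ι → ZMod 2) (hh : bdH u v h = 0)
    (hne : h ≠ 0) : 3 ≤ (Finset.univ.filter (fun i => h i ≠ 0)).card := by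
  obtain ⟨i, hi⟩ := Function.ne_iff.mp hne
  have key : ∀ w, (w = u i ∨ w = v i) → ∃ j, j ≠ i ∧ h j ≠ 0 ∧ (w = u j ∨ w = v j) := by
    intro w hw
    by_contra hcon
    push Not at hcon
    have h0 := congrFun hh w
    rw [bdH_apply, Finset.sum_eq_single i] at h0
    · have := huv i
      rcases hw with rfl | rfl
      · simp [this] at h0; exact hi h0
      · simp [this.symm] at h0; exact hi h0
    · intro j _ hj
      by_cases hz : h j = 0
      · simp [hz]
      · have := hcon j hj hz
        simp [this]
    · simp
  obtain ⟨j, hj1, hj2, hj3⟩ := key (u i) (Or.inl rfl)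
  obtain ⟨l, hl1, hl2, hl3⟩ := key (v i) (Or.inr rfl)
  have hjl : j ≠ l := by
    rintro rfl
    apply hj1
    apply hinj
    have := huv i
    rw [Sym2.eq_iff]
    rcases hj3 with h1 | h1 <;> rcases hl3 with h2 | h2
    · exact absurd (h1.trans h2.symm) this
    · left; exact ⟨h1.symm, h2.symm⟩
    · right; exact ⟨h2.symm, h1.symm⟩
    · exact absurd (h1.trans h2.symm) this
  have : ({i, j, l} : Finset ι) ⊆ Finset.univ.filter (fun i => h i ≠ 0) := by
    intro a ha
    simp only [Finset.mem_insert, Finset.mem_singleton] at ha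
    rcases ha with rfl | rfl | rfl <;> simp [*] 
    exact hi
  calc 3 = ({i, j, l} : Finset ι).card := by
        rw [Finset.card_eq_three.mpr ⟨i, j, l, hj1.symm, hl1.symm, hjl, rfl⟩]
    _ ≤ _ := Finset.card_le_card this

set_option maxHeartbeats 4000000 in
theorem planar_bound (β : ℤ × ℤ → Option V)
    (hfin : ∀ w, {z | β z = some w}.Finite) (hconn : ∀ w, GConn GAdj {z | β z = some w})
    (hnon : ∀ w, {z | β z = some w}.Nonempty)
    (e : ι → GE) (u v : ι → V) (hu : ∀ i, β (gtail (e i)) = some (u i))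
    (hv : ∀ i, β (ghead (e i)) = some (v i)) (huv : ∀ i, u i ≠ v i)
    (hinj : ∀ i j, s(u i, v i) = s(u j, v j) → i = j) :
    Fintype.card ι ≤ 3 * Fintype.card V := by
  classical
  have heinj : Function.Injective e := by
    intro i j hij
    apply hinj
    have h1 := hu i; have h2 := hv i
    rw [hij, hu j] at h1; rw [hij, hv j] at h2
    rw [Option.some.inj h1, Option.some.inj h2]
  let Con : Set GE := {d | ∃ w, β (gtail d) = some w ∧ β (ghead d) = some w}
  have hConE : ∀ i, e i ∉ Con := by
    rintro i ⟨w, h1, h2⟩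
    rw [hu] at h1; rw [hv] at h2
    exact huv i ((Option.some.inj h1).trans (Option.some.inj h2).symm)
  have hConfin : Con.Finite := by
    have : Con ⊆ ⋃ w : V, ({z | β z = some w} ×ˢ (Set.univ : Set Bool)) := by
      rintro d ⟨w, h1, h2⟩
      simp only [Set.mem_iUnion]
      exact ⟨w, h1, trivial⟩
    exact (Set.finite_iUnion fun w => (hfin w).prod Set.finite_univ).subset this
  let rel : ℤ × ℤ → ℤ × ℤ → Prop := fun a b => ∃ d, d ∉ Con ∧ d ∉ Set.range e ∧ gl d = a ∧ gr d = b
  let R := Quot rel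
  let q : ℤ × ℤ → R := Quot.mk rel
  -- region boundaries are cycles
  have hreg : ∀ F : R → ZMod 2, bdH u v (fun i => F (q (gl (e i))) + F (q (gr (e i)))) = 0 := by
    intro F
    let f : ℤ × ℤ → ZMod 2 := fun z => F (q z)
    let x : GE → ZMod 2 := fun d => f (gl d) + f (gr d)
    have hx : bd x = 0 := bd_cob f
    have hx0 : ∀ d, d ∉ Con → d ∉ Set.range e → x d = 0 := by
      intro d h1 h2
      have : q (gl d) = q (gr d) := Quot.sound ⟨d, h1, h2, rfl, rfl⟩
      simp only [x, f, this, z2_add_self]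
    let T : Finset GE := hConfin.toFinset ∪ Finset.univ.image e
    have hxT : x = ∑ d ∈ T, x d • (Pi.single d 1 : GE → ZMod 2) := by
      funext d
      rw [Finset.sum_apply]
      simp only [Pi.smul_apply, Pi.single_apply, smul_eq_mul, mul_ite, mul_one, mul_zero]
      rw [Finset.sum_ite_eq]
      split_ifs with h
      · rfl
      · apply hx0
        · intro h'; apply h; simp [T, h']
        · rintro ⟨i, rfl⟩; apply h; simp [T]
    funext w
    let B : Finset (ℤ × ℤ) := (hfin w).toFinset
    have hB : ∀ z, z ∈ B ↔ β z = some w := by intro z; simp [B]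
    have h0 : ∑ z ∈ B, bd x z = 0 := by simp [hx]
    rw [hxT, bd_sum] at h0
    simp only [bd_smul, bd_single, Finset.sum_apply, Pi.smul_apply, Pi.add_apply, smul_eq_mul] at h0
    rw [Finset.sum_comm] at h0
    simp only [← Finset.mul_sum, Finset.sum_add_distrib, Pi.single_apply, Finset.sum_ite_eq', hB] at h0
    have hdis : Disjoint hConfin.toFinset (Finset.univ.image e) := by
      rw [Finset.disjoint_left]
      intro d hd hd'
      simp only [Finset.mem_image, Finset.mem_univ, true_and] at hd'
      obtain ⟨i, rfl⟩ := hd'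
      exact hConE i (by simpa using hd)
    rw [Finset.sum_union hdis, Finset.sum_eq_zero (s := hConfin.toFinset), zero_add,
      Finset.sum_image (fun a _ b _ h => heinj h)] at h0
    · rw [bdH_apply, Pi.zero_apply]
      refine Eq.trans ?_ h0
      apply Finset.sum_congr rfl
      intro i _
      simp only [hu, hv, Option.some.injEq, x, f, @eq_comm _ w]
    · intro d hd
      obtain ⟨w', h1, h2⟩ : d ∈ Con := by simpa using hd
      rw [h1, h2, z2_add_self, mul_zero]
  let W : R → Finset ι := fun ρ => Finset.univ.filter
    (fun i => (if q (gl (e i)) = ρ then (1 : ZMod 2) else 0) + (if q (gr (e i)) = ρ then 1 else 0) ≠ 0)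
  have hW3 : ∀ ρ, (W ρ).Nonempty → 3 ≤ (W ρ).card := by
    intro ρ hρ
    apply weight_three u v huv hinj _ (hreg (fun s => if s = ρ then 1 else 0))
    obtain ⟨i, hi⟩ := hρ
    intro h0
    have := congrFun h0 i
    simp only [W, Finset.mem_filter] at hi
    exact hi.2 this
  have hWmem : ∀ ρ i, i ∈ W ρ ↔ q (gl (e i)) ≠ q (gr (e i)) ∧ (ρ = q (gl (e i)) ∨ ρ = q (gr (e i))) := by
    intro ρ i
    simp only [W, Finset.mem_filter, Finset.mem_univ, true_and]
    by_cases h1 : q (gl (e i)) = ρ <;> by_cases h2 : q (gr (e i)) = ρ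
    · simp [h1, h2, z2_add_self]
    · simp [h1, h2, Ne.symm h2]
    · simp [h1, h2]
    · simp [h1, h2, Ne.symm h1, Ne.symm h2]
  let RS : Finset R := (Finset.univ.image (fun i => q (gl (e i))) ∪
    Finset.univ.image (fun i => q (gr (e i)))).filter (fun ρ => (W ρ).Nonempty)
  have hcount : 3 * RS.card ≤ 2 * Fintype.card ι := by
    have h1 : 3 * RS.card ≤ ∑ ρ ∈ RS, (W ρ).card := by
      rw [mul_comm, ← smul_eq_mul]
      apply Finset.card_nsmul_le_sum
      intro ρ hρ
      exact hW3 ρ (Finset.mem_filter.mp hρ).2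
    have h2 : ∑ ρ ∈ RS, (W ρ).card = ∑ i : ι, (RS.filter (fun ρ => i ∈ W ρ)).card := by
      have := Finset.sum_card_bipartiteAbove_eq_sum_card_bipartiteBelow (s := RS) (t := (Finset.univ : Finset ι))
        (fun ρ i => i ∈ W ρ)
      simpa [Finset.bipartiteAbove, Finset.bipartiteBelow] using this
    have h3 : ∀ i : ι, (RS.filter (fun ρ => i ∈ W ρ)).card ≤ 2 := by
      intro i
      calc _ ≤ ({q (gl (e i)), q (gr (e i))} : Finset R).card := by
            apply Finset.card_le_card
            intro ρ hρ
            have := ((hWmem ρ i).mp (Finset.mem_filter.mp hρ).2).2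
            simpa using this
        _ ≤ 2 := Finset.card_le_two
    calc 3 * RS.card ≤ _ := h1
      _ = _ := h2
      _ ≤ ∑ i : ι, 2 := Finset.sum_le_sum (fun i _ => h3 i)
      _ = _ := by simp [mul_comm]
  -- cycle space is generated by regions
  let Φ : (RS → ZMod 2) →ₗ[ZMod 2] (ι → ZMod 2) :=
    Fintype.linearCombination (ZMod 2) (fun ρ : RS => fun i => if i ∈ W ρ then (1 : ZMod 2) else 0)
  choose r hr using hnon
  have hc1 : ∀ i, ∃ y : GE → ZMod 2, {e | y e ≠ 0}.Finite ∧ (∀ d, y d ≠ 0 → d ∈ Con) ∧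
      bd y = Pi.single (gtail (e i)) 1 + Pi.single (r (u i)) 1 := by
    intro i
    obtain ⟨y, h1, h2, h3⟩ := conn_chain (hconn (u i)) (hr (u i)) (hu i)
    exact ⟨y, h1, fun d hd => ⟨u i, h2 d hd⟩, h3⟩
  have hc2 : ∀ i, ∃ y : GE → ZMod 2, {e | y e ≠ 0}.Finite ∧ (∀ d, y d ≠ 0 → d ∈ Con) ∧
      bd y = Pi.single (ghead (e i)) 1 + Pi.single (r (v i)) 1 := by
    intro i
    obtain ⟨y, h1, h2, h3⟩ := conn_chain (hconn (v i)) (hr (v i)) (hv i)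
    exact ⟨y, h1, fun d hd => ⟨v i, h2 d hd⟩, h3⟩
  choose y1 hy1f hy1c hy1b using hc1
  choose y2 hy2f hy2c hy2b using hc2
  have hker : LinearMap.ker (bdH u v) ≤ LinearMap.range Φ := by
    intro h hh
    rw [LinearMap.mem_ker] at hh
    let y : GE → ZMod 2 := ∑ i, h i • (Pi.single (e i) 1 + y1 i + y2 i)
    have hyb : bd y = 0 := by
      simp only [y, bd_sum, bd_smul, bd_add, bd_single, hy1b, hy2b]
      have e1 : ∀ i, (Pi.single (gtail (e i)) 1 + Pi.single (ghead (e i)) 1 +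
        (Pi.single (gtail (e i)) 1 + Pi.single (r (u i)) 1) +
        (Pi.single (ghead (e i)) 1 + Pi.single (r (v i)) 1) : ℤ × ℤ → ZMod 2) =
          Pi.single (r (u i)) 1 + Pi.single (r (v i)) 1 := by
        intro i; funext w; simp only [Pi.add_apply]
        generalize (Pi.single (gtail (e i)) 1 : ℤ × ℤ → ZMod 2) w = a
        generalize (Pi.single (ghead (e i)) 1 : ℤ × ℤ → ZMod 2) w = b
        generalize (Pi.single (r (u i)) 1 : ℤ × ℤ → ZMod 2) w = c
        generalize (Pi.single (r (v i)) 1 : ℤ × ℤ → ZMod 2) w = d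
        revert a b c d; decide
      simp only [e1]
      funext z
      simp only [Finset.sum_apply, Pi.smul_apply, Pi.add_apply, smul_eq_mul, Pi.single_apply, Pi.zero_apply]
      by_cases hz : ∃ w, z = r w
      · obtain ⟨w, rfl⟩ := hz
        have hrinj : ∀ a b, r a = r b ↔ a = b := by
          intro a b
          constructor
          · intro hab
            have h1 := hr a; have h2 := hr b
            simp only [Set.mem_ofPred_eq] at h1 h2
            rw [hab, h2] at h1
            exact (Option.some.inj h1).symm
          · rintro rfl; rfl
        simp only [hrinj]
        rw [← bdH_apply, hh]; rfl
      · push Not at hz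
        simp [hz]
    have hyf : {d | y d ≠ 0}.Finite := by
      apply (hConfin.union (Set.finite_range e)).subset
      intro d hd
      by_contra hcon
      simp only [Set.mem_union, not_or] at hcon
      apply hd
      simp only [y, Finset.sum_apply, Pi.smul_apply, Pi.add_apply]
      apply Finset.sum_eq_zero
      intro i _
      have h1 : y1 i d = 0 := by by_contra h'; exact hcon.1 (hy1c i d h')
      have h2 : y2 i d = 0 := by by_contra h'; exact hcon.1 (hy2c i d h')
      have h3 : d ≠ e i := by rintro rfl; exact hcon.2 ⟨i, rfl⟩
      simp [h1, h2, h3]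
    have hy0 : ∀ d, d ∉ Con → d ∉ Set.range e → y d = 0 := by
      intro d hc1 hc2
      simp only [y, Finset.sum_apply, Pi.smul_apply, Pi.add_apply]
      apply Finset.sum_eq_zero
      intro i _
      have h1 : y1 i d = 0 := by by_contra h'; exact hc1 (hy1c i d h')
      have h2 : y2 i d = 0 := by by_contra h'; exact hc1 (hy2c i d h')
      have h3 : d ≠ e i := by rintro rfl; exact hc2 ⟨i, rfl⟩
      simp [h1, h2, h3]
    have hye : ∀ j, y (e j) = h j := by
      intro j
      simp only [y, Finset.sum_apply, Pi.smul_apply, Pi.add_apply]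
      rw [Finset.sum_eq_single j]
      · have h1 : y1 j (e j) = 0 := by by_contra h'; exact hConE j (hy1c j _ h')
        have h2 : y2 j (e j) = 0 := by by_contra h'; exact hConE j (hy2c j _ h')
        simp [h1, h2]
      · intro i _ hij
        have h1 : y1 i (e j) = 0 := by by_contra h'; exact hConE j (hy1c i _ h')
        have h2 : y2 i (e j) = 0 := by by_contra h'; exact hConE j (hy2c i _ h')
        have h3 : e j ≠ e i := fun h' => hij (heinj h').symm
        simp [h1, h2, h3]
      · simp
    obtain ⟨f, hf⟩ := cycle_bounds y hyf hyb
    have hfrel : ∀ a b, rel a b → f a = f b := by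
      rintro a b ⟨d, h1, h2, rfl, rfl⟩
      have := hf d
      rw [hy0 d h1 h2] at this
      revert this
      generalize f (gl d) = a
      generalize f (gr d) = b
      revert a b; decide
    let F : R → ZMod 2 := Quot.lift f hfrel
    refine ⟨fun ρ => F ρ, ?_⟩
    funext i
    have e0 : h i = F (q (gl (e i))) + F (q (gr (e i))) := by rw [← hye]; exact hf (e i)
    simp only [Φ, Fintype.linearCombination_apply, Finset.sum_apply, Pi.smul_apply, smul_eq_mul]
    have e1 := Finset.sum_coe_sort RS (fun ρ => F ρ * if i ∈ W ρ then (1 : ZMod 2) else 0)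
    rw [e1, e0]
    by_cases hq : q (gl (e i)) = q (gr (e i))
    · rw [hq, z2_add_self]
      apply Finset.sum_eq_zero
      intro ρ _
      rw [if_neg, mul_zero]
      rw [hWmem]; exact fun h => h.1 hq
    · have hsub : ({q (gl (e i)), q (gr (e i))} : Finset R) ⊆ RS := by
        intro ρ hρ
        simp only [Finset.mem_insert, Finset.mem_singleton] at hρ
        refine Finset.mem_filter.mpr ⟨?_, ⟨i, (hWmem ρ i).mpr ⟨hq, hρ⟩⟩⟩
        rcases hρ with rfl | rfl <;> simp
      rw [← Finset.sum_subset hsub, Finset.sum_pair hq]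
      · rw [if_pos ((hWmem _ i).mpr ⟨hq, Or.inl rfl⟩), if_pos ((hWmem _ i).mpr ⟨hq, Or.inr rfl⟩)]
        simp
      · intro ρ _ hρ
        rw [if_neg, mul_zero]
        rw [hWmem]; intro h; apply hρ; simpa using h.2
  have d1 := LinearMap.finrank_range_add_finrank_ker (bdH u v)
  have d2 : Module.finrank (ZMod 2) (LinearMap.range (bdH u v)) ≤ Fintype.card V := by
    have := Submodule.finrank_le (LinearMap.range (bdH u v))
    simpa using this
  have d3 := Submodule.finrank_mono hker
  have d4 := LinearMap.finrank_range_le Φ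
  simp only [Module.finrank_fintype_fun_eq_card, Fintype.card_coe] at d1 d4
  omega

end minor
end PlanarAux

namespace PlanarAux

lemma conn_insert {P : Type*} {R : P → P → Prop} (hs : ∀ a b, R a b → R b a) {B : Set P}
    (hB : GConn R B) {a b : P} (ha : a ∈ B) (hab : R a b) : GConn R (insert b B) := by
  intro S hS hne hcl
  have hne' : (S ∩ B).Nonempty := by
    obtain ⟨x, hx⟩ := hne
    rcases hS hx with rfl | h
    · exact ⟨a, hcl x hx a (Or.inr ha) (hs _ _ hab), ha⟩
    · exact ⟨x, hx, h⟩
  have h1 := hB (S ∩ B) Set.inter_subset_right hne'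
    (fun x hx y hy hxy => ⟨hcl x hx.1 y (Or.inr hy) hxy, hy⟩)
  rintro x (rfl | hx)
  · exact hcl a (h1 ha).1 x (Or.inl rfl) hab
  · exact (h1 hx).1

lemma GAdj.symm' (a b : ℤ × ℤ) (h : GAdj a b) : GAdj b a := by
  obtain ⟨e, h | h⟩ := h
  · exact ⟨e, Or.inr h⟩
  · exact ⟨e, Or.inl h⟩

def levelSet {P : Type*} (R : P → P → Prop) (B : Set P) (r : P) : ℕ → Set P
  | 0 => {r}
  | n + 1 => {b | b ∈ B ∧ ∃ a ∈ levelSet R B r n, R a b}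

lemma exists_parent {P : Type*} {R : P → P → Prop} {B : Set P} (hB : GConn R B) {r : P} (hr : r ∈ B) :
    ∃ (l : P → ℕ) (p : P → P), ∀ D ∈ B, D ≠ r → p D ∈ B ∧ R (p D) D ∧ l (p D) < l D := by
  classical
  let L : ℕ → Set P := levelSet R B r
  have hL0 : L 0 = {r} := rfl
  have hLs : ∀ n, L (n + 1) = {b | b ∈ B ∧ ∃ a ∈ L n, R a b} := fun _ => rfl
  have hLB : ∀ n, L n ⊆ B := by
    intro n
    cases n with
    | zero => rw [hL0]; simpa using hr
    | succ n => rw [hLs]; exact fun x hx => hx.1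
  have hall : B ⊆ ⋃ n, L n := by
    apply hB
    · exact Set.iUnion_subset hLB
    · exact ⟨r, Set.mem_iUnion.mpr ⟨0, by simp [hL0]⟩⟩
    · intro a ha b hb hab
      obtain ⟨n, hn⟩ := Set.mem_iUnion.mp ha
      exact Set.mem_iUnion.mpr ⟨n + 1, by rw [hLs]; exact ⟨hb, a, hn, hab⟩⟩
  have hex : ∀ D ∈ B, ∃ n, D ∈ L n := fun D hD => Set.mem_iUnion.mp (hall hD)
  let l : P → ℕ := fun D => if h : (∃ n : ℕ, D ∈ L n) then Nat.find (p := fun n => D ∈ L n) h else 0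
  have hp : ∀ D, ∃ p, D ∈ B → D ≠ r → p ∈ B ∧ R p D ∧ l p < l D := by
    intro D
    by_cases hD : D ∈ B ∧ D ≠ r
    · have h := hex D hD.1
      have h1 : l D = Nat.find h := dif_pos h
      have h2 := Nat.find_spec h
      rw [← h1] at h2
      cases hl : l D with
      | zero => rw [hl, hL0] at h2; exact absurd h2 hD.2
      | succ m =>
        rw [hl, hLs] at h2
        obtain ⟨_, a, ha, hR⟩ := h2
        refine ⟨a, fun _ _ => ⟨hLB _ ha, hR, ?_⟩⟩
        have h3 : ∃ n, a ∈ L n := ⟨m, ha⟩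
        have h4 : l a = Nat.find h3 := dif_pos h3
        have := Nat.find_min' h3 ha
        omega
    · exact ⟨r, fun h1 h2 => absurd ⟨h1, h2⟩ hD⟩
  choose p hp using hp
  exact ⟨l, p, hp⟩

/-- Discrete model of the planar configuration. -/
structure GridModel {V K : Type*} (rel : K → V → Prop) where
  GD : V → Set (ℤ × ℤ)
  GC : K → Set (ℤ × ℤ)
  hDD : ∀ D D', D ≠ D' → Disjoint (GD D) (GD D')
  hCD : ∀ C D, ¬ rel C D → Disjoint (GC C) (GD D)
  hsub : ∀ C D, rel C D → GD D ⊆ GC C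
  hCC : ∀ C C', C ≠ C' → ∀ z ∈ GC C, z ∈ GC C' → ∃ D, z ∈ GD D
  finD : ∀ D, (GD D).Finite
  finC : ∀ C, (GC C).Finite
  neD : ∀ D, (GD D).Nonempty
  connD : ∀ D, GConn GAdj (GD D)
  connC : ∀ C, GConn GAdj (GC C)

section
variable {V K : Type*} {rel : K → V → Prop}

lemma exists_minor [Finite V] [Finite K] (M : GridModel rel) (hne : ∀ C, ∃ D, rel C D) :
    ∃ β : ℤ × ℤ → Option V, (∀ w, {z | β z = some w}.Finite) ∧
      (∀ w, GConn GAdj {z | β z = some w}) ∧ (∀ D, ∀ z ∈ M.GD D, β z = some D) ∧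
      (∀ C, ∀ z ∈ M.GC C, ∃ D, rel C D ∧ β z = some D) := by
  classical
  let I : (ℤ × ℤ → Option V) → Prop := fun β =>
    (∀ D, ∀ z ∈ M.GD D, β z = some D) ∧ (∀ w, GConn GAdj {z | β z = some w}) ∧
    (∀ C, ∀ z ∈ M.GC C, ∀ D, β z = some D → rel C D) ∧
    (∀ z D, β z = some D → z ∈ (⋃ C, M.GC C) ∪ ⋃ D, M.GD D)
  have hUfin : (⋃ C, M.GC C).Finite := Set.finite_iUnion M.finC
  have hU2 : ((⋃ C, M.GC C) ∪ ⋃ D, M.GD D).Finite := hUfin.union (Set.finite_iUnion M.finD)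
  have hI0 : ∃ β, I β := by
    let β : ℤ × ℤ → Option V := fun z => if h : ∃ D, z ∈ M.GD D then some h.choose else none
    have hβ : ∀ z D, β z = some D ↔ z ∈ M.GD D := by
      intro z D
      by_cases h : ∃ D, z ∈ M.GD D
      · have h1 : β z = some h.choose := dif_pos h
        rw [h1, Option.some.injEq]
        constructor
        · rintro rfl; exact h.choose_spec
        · intro hz
          by_contra hcon
          exact Set.disjoint_left.mp (M.hDD _ _ hcon) h.choose_spec hz
      · have h1 : β z = none := dif_neg h
        rw [h1]
        simp only [reduceCtorEq, false_iff]
        exact fun hz => h ⟨D, hz⟩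
    refine ⟨β, fun D z hz => (hβ z D).mpr hz, ?_, ?_, ?_⟩
    · intro w
      have : {z | β z = some w} = M.GD w := by ext z; exact hβ z w
      rw [this]; exact M.connD w
    · intro C z hz D hD
      by_contra hcon
      exact Set.disjoint_left.mp (M.hCD C D hcon) hz ((hβ z D).mp hD)
    · intro z D hD
      exact Or.inr (Set.mem_iUnion.mpr ⟨D, (hβ z D).mp hD⟩)
  let μ : (ℤ × ℤ → Option V) → ℕ := fun β => {z | z ∈ (⋃ C, M.GC C) ∧ β z = none}.ncard
  obtain ⟨β, hβ, hmin⟩ : ∃ β, I β ∧ ∀ β', I β' → μ β ≤ μ β' := by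
    have hex : ∃ n, ∃ β, I β ∧ μ β = n := by
      obtain ⟨β, h⟩ := hI0; exact ⟨_, β, h, rfl⟩
    obtain ⟨β, h1, h2⟩ := Nat.find_spec hex
    exact ⟨β, h1, fun β' h' => h2 ▸ Nat.find_min' hex ⟨β', h', rfl⟩⟩
  obtain ⟨ha, hb, hc, hd⟩ := hβ
  refine ⟨β, fun w => hU2.subset fun z hz => hd z w hz, hb, ha, ?_⟩
  intro C z hz
  by_contra hcon
  have hz0 : β z = none := by
    rcases h : β z with _ | D
    · rfl
    · exact absurd ⟨D, hc C z hz D h, h⟩ hcon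
  -- find a boundary edge
  obtain ⟨a, haC, ⟨D, haD⟩, b, hbC, hab, hbn⟩ : ∃ a ∈ M.GC C, (∃ D, β a = some D) ∧
      ∃ b ∈ M.GC C, GAdj a b ∧ β b = none := by
    by_contra hno
    push Not at hno
    have := M.connC C {a | a ∈ M.GC C ∧ ∃ D, β a = some D} (fun _ h => h.1) ?_ ?_ hz
    · obtain ⟨_, D, hD⟩ := this
      rw [hz0] at hD; exact absurd hD (by simp)
    · obtain ⟨D, hD⟩ := hne C
      obtain ⟨x, hx⟩ := M.neD D
      exact ⟨x, M.hsub C D hD hx, D, ha D x hx⟩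
    · rintro a ⟨h1, D, h2⟩ b hb hab
      refine ⟨hb, ?_⟩
      rcases h : β b with _ | D'
      · exact (hno a h1 ⟨D, h2⟩ b hb hab h).elim
      · exact ⟨D', rfl⟩
  have hrelD := hc C a haC D haD
  let β' := Function.update β b (some D)
  have hb' : β' b = some D := Function.update_self ..
  have hb'' : ∀ x, x ≠ b → β' x = β x := fun x hx => Function.update_of_ne hx ..
  have hbnot : ∀ D', b ∉ M.GD D' := by
    intro D' h
    rw [ha D' b h] at hbn; simp at hbn
  have hI' : I β' := by
    refine ⟨?_, ?_, ?_, ?_⟩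
    · intro D' x hx
      rw [hb'' x (by rintro rfl; exact hbnot D' hx)]
      exact ha D' x hx
    · intro w
      by_cases hw : w = D
      · subst hw
        have : {z | β' z = some w} = insert b {z | β z = some w} := by
          ext x
          by_cases hx : x = b
          · subst hx; simp [hb']
          · simp [hb'' x hx, hx]
        rw [this]
        exact conn_insert GAdj.symm' (hb w) haD hab
      · have : {z | β' z = some w} = {z | β z = some w} := by
          ext x
          by_cases hx : x = b
          · subst hx; simp [hb', hbn, Ne.symm hw]
          · simp [hb'' x hx]
        rw [this]; exact hb w
    · intro C' x hx D' hD'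
      by_cases hxb : x = b
      · subst hxb
        rw [hb'] at hD'
        obtain rfl := Option.some.inj hD'
        by_cases hC : C' = C
        · rw [hC]; exact hrelD
        · obtain ⟨D'', h⟩ := M.hCC C' C hC x hx hbC
          exact absurd h (hbnot D'')
      · rw [hb'' x hxb] at hD'
        exact hc C' x hx D' hD'
    · intro x D' hD'
      by_cases hxb : x = b
      · subst hxb; exact Or.inl (Set.mem_iUnion.mpr ⟨C, hbC⟩)
      · rw [hb'' x hxb] at hD'; exact hd x D' hD'
  have hlt : μ β' < μ β := by
    apply Set.ncard_lt_ncard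
    · constructor
      · rintro x ⟨hx1, hx2⟩
        refine ⟨hx1, ?_⟩
        have : x ≠ b := by rintro rfl; rw [hb'] at hx2; simp at hx2
        rwa [hb'' x this] at hx2
      · intro h
        have := h (show b ∈ _ from ⟨Set.mem_iUnion.mpr ⟨C, hbC⟩, hbn⟩)
        have h2 := this.2
        rw [hb'] at h2; simp at h2
    · exact hUfin.subset fun x hx => hx.1
  exact absurd (hmin β' hI') (by omega)

set_option maxHeartbeats 1000000 in
theorem count_bound [Fintype V] [Fintype K] (M : GridModel rel) (hne : ∀ C, ∃ D, rel C D)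
    {N : Type*} [DecidableEq N] (k : ℕ) (s : V → Finset N) (t : K → Finset N)
    (hs : ∀ D, (s D).card = k + 1) (ht : ∀ C, (t C).card = k)
    (hrel : ∀ C D, rel C D → t C ⊆ s D)
    (hex : ∀ D, ∀ τ ⊆ s D, τ.card = k → ∃ C, t C = τ ∧ rel C D)
    (huniq : ∀ D C C', rel C D → rel C' D → t C = t C' → C = C') :
    k * (Finset.univ.image s).card ≤ 2 * Fintype.card V + Fintype.card K := by
  classical
  obtain ⟨β, hfin, hconn, hβD, hβC⟩ := exists_minor M hne
  have hpar : ∀ C, ∃ (r : V) (l : V → ℕ) (p : V → V), rel C r ∧ ∀ D, rel C D → D ≠ r →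
      rel C (p D) ∧ (∃ z z', GAdj z z' ∧ β z = some (p D) ∧ β z' = some D) ∧ l (p D) < l D := by
    intro C
    obtain ⟨r, hr⟩ := hne C
    have hc : GConn (fun a b => ∃ z ∈ M.GC C, ∃ z' ∈ M.GC C, GAdj z z' ∧ β z = some a ∧ β z' = some b)
        {D | rel C D} := by
      intro S hS hSne hcl
      have h1 := M.connC C {z | z ∈ M.GC C ∧ ∃ D ∈ S, β z = some D} (fun _ h => h.1) ?_ ?_
      · intro D hD
        obtain ⟨z, hz⟩ := M.neD D
        obtain ⟨_, D', h2, h3⟩ := h1 (M.hsub C D hD hz)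
        rw [hβD D z hz] at h3
        rw [Option.some.inj h3]; exact h2
      · obtain ⟨D, hD⟩ := hSne
        obtain ⟨z, hz⟩ := M.neD D
        exact ⟨z, M.hsub C D (hS hD) hz, D, hD, hβD D z hz⟩
      · rintro a ⟨ha, D, hD, hD2⟩ b hb hab
        obtain ⟨D', hD', hbD'⟩ := hβC C b hb
        exact ⟨hb, D', hcl D hD D' hD' ⟨a, ha, b, hb, hab, hD2, hbD'⟩, hbD'⟩
    obtain ⟨l, p, h⟩ := exists_parent hc (r := r) hr
    refine ⟨r, l, p, hr, fun D hD hDr => ?_⟩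
    obtain ⟨h1, ⟨z, _, z', _, h2⟩, h3⟩ := h D hD hDr
    exact ⟨h1, ⟨z, z', h2⟩, h3⟩
  choose r l p hrr hp using hpar
  have hτ : ∀ σ : Finset N, ∃ τ, σ.card = k + 1 → τ ⊆ σ ∧ τ.card = k := by
    intro σ
    by_cases h : σ.card = k + 1
    · obtain ⟨τ, h1, h2⟩ := Finset.exists_subset_card_eq (s := σ) (n := k) (by omega)
      exact ⟨τ, fun _ => ⟨h1, h2⟩⟩
    · exact ⟨∅, fun h' => absurd h' h⟩
  choose τ0 hτ0 using hτ
  let All : Finset (K × V) := Finset.univ.filter (fun q => rel q.1 q.2)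
  let Q : Finset (K × V) := All.filter (fun q => q.2 ≠ r q.1)
  let Bad : Finset (K × V) := Q.filter (fun q => s q.2 = s (p q.1 q.2) ∧ t q.1 ≠ τ0 (s q.2))
  let Keep : Finset (K × V) := Q.filter (fun q => ¬ (s q.2 = s (p q.1 q.2) ∧ t q.1 ≠ τ0 (s q.2)))
  have hQmem : ∀ q, q ∈ Q ↔ rel q.1 q.2 ∧ q.2 ≠ r q.1 := by intro q; simp [Q, All]
  have hAll : All.card = (k + 1) * Fintype.card V := by
    have : All.card = ∑ D : V, (All.filter (fun q => q.2 = D)).card :=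
      Finset.card_eq_sum_card_fiberwise (fun q _ => Finset.mem_univ _)
    rw [this, Finset.sum_congr rfl (g := fun _ => k + 1)]
    · simp [mul_comm]
    · intro D _
      have h1 : (Finset.powersetCard k (s D)).card = k + 1 := by
        rw [Finset.card_powersetCard, hs]; simp
      rw [← h1]
      apply Finset.card_bij (fun q _ => t q.1)
      · rintro ⟨C, D'⟩ hq
        simp only [All, Finset.mem_filter, Finset.mem_univ, true_and] at hq
        obtain ⟨hq, rfl⟩ := hq
        rw [Finset.mem_powersetCard]
        exact ⟨hrel _ _ hq, ht C⟩
      · rintro ⟨C, D'⟩ hq ⟨C', D''⟩ hq' h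
        simp only [All, Finset.mem_filter, Finset.mem_univ, true_and] at hq hq'
        obtain ⟨hq, rfl⟩ := hq
        obtain ⟨hq', rfl⟩ := hq'
        rw [huniq _ _ _ hq hq' h]
      · intro τ hτ
        rw [Finset.mem_powersetCard] at hτ
        obtain ⟨C, h1, h2⟩ := hex D τ hτ.1 hτ.2
        exact ⟨(C, D), by simp [All, h2], h1⟩
  have hRoot : (All.filter (fun q => ¬ q.2 ≠ r q.1)).card = Fintype.card K := by
    rw [← Finset.card_univ]
    apply Finset.card_bij (fun q _ => q.1)
    · intro q _; simp
    · rintro ⟨C, D'⟩ hq ⟨C', D''⟩ hq' h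
      simp [All] at hq hq' h
      subst h
      rw [hq.2, hq'.2]
    · intro C _
      exact ⟨(C, r C), by simp [All, hrr], rfl⟩
  have hQ : Q.card + Fintype.card K = (k + 1) * Fintype.card V := by
    rw [← hRoot, ← hAll]
    exact Finset.card_filter_add_card_filter_not _
  have hKB : Bad.card + Keep.card = Q.card := Finset.card_filter_add_card_filter_not _
  -- Bad
  let J : Finset ((_ : Finset N) × Finset N) :=
    (Finset.univ.image s).sigma (fun σ => (Finset.powersetCard k σ).erase (τ0 σ))
  have hJk : ∀ σ ∈ Finset.univ.image s, ((Finset.powersetCard k σ).erase (τ0 σ)).card = k := by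
    intro σ hσ
    obtain ⟨D, _, rfl⟩ := Finset.mem_image.mp hσ
    rw [Finset.card_erase_of_mem, Finset.card_powersetCard, hs]
    · simp
    · rw [Finset.mem_powersetCard]; exact hτ0 _ (hs D)
  have hJ : J.card = k * (Finset.univ.image s).card := by
    simp only [J]
    rw [Finset.card_sigma, Finset.sum_congr rfl hJk]
    simp [mul_comm]
  have hJsum : ∑ j ∈ J, (Finset.univ.filter (fun D => s D = j.1)).card = k * Fintype.card V := by
    simp only [J]
    rw [Finset.sum_sigma]
    simp only [Finset.sum_const, smul_eq_mul]
    rw [Finset.sum_congr rfl (g := fun σ => k * (Finset.univ.filter (fun D => s D = σ)).card)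
      (fun σ hσ => by rw [hJk σ hσ])]
    rw [← Finset.mul_sum, ← Finset.card_univ (α := V)]
    congr 1
    exact (Finset.card_eq_sum_card_fiberwise (fun q _ => Finset.mem_image_of_mem s (Finset.mem_univ q))).symm
  have hBadmem : ∀ q, q ∈ Bad ↔ (rel q.1 q.2 ∧ q.2 ≠ r q.1) ∧ s q.2 = s (p q.1 q.2) ∧ t q.1 ≠ τ0 (s q.2) := by
    intro q; simp only [Bad, Finset.mem_filter, hQmem]
  have hBad : Bad.card + k * (Finset.univ.image s).card ≤ k * Fintype.card V := by
    rw [← hJ, ← hJsum]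
    have h1 : Bad.card = ∑ j ∈ J, (Bad.filter (fun q => (⟨s q.2, t q.1⟩ : (_ : Finset N) × Finset N) = j)).card := by
      apply Finset.card_eq_sum_card_fiberwise
      intro q hq
      rw [Finset.mem_coe, hBadmem] at hq
      simp only [J, Finset.mem_coe, Finset.mem_sigma, Finset.mem_erase, Finset.mem_powersetCard]
      exact ⟨Finset.mem_image_of_mem s (Finset.mem_univ _), hq.2.2, hrel _ _ hq.1.1, ht _⟩
    rw [h1, Finset.card_eq_sum_ones, ← Finset.sum_add_distrib]
    apply Finset.sum_le_sum
    rintro ⟨σ, τ⟩ hj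
    simp only [J, Finset.mem_sigma, Finset.mem_erase, Finset.mem_powersetCard] at hj
    obtain ⟨hσ, hne0, hτσ, hτk⟩ := hj
    have hCex : ∀ D, ∃ C, s D = σ → t C = τ ∧ rel C D := by
      intro D
      by_cases h : s D = σ
      · subst h
        obtain ⟨C, hC⟩ := hex D τ hτσ hτk
        exact ⟨C, fun _ => hC⟩
      · obtain ⟨D0, _, h0⟩ := Finset.mem_image.mp hσ
        obtain ⟨C, hC⟩ := hex D0 τ (h0 ▸ hτσ) hτk
        exact ⟨C, fun h' => absurd h' h⟩
    choose c hc using hCex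
    have hVne : (Finset.univ.filter (fun D => s D = σ)).Nonempty := by
      obtain ⟨D0, _, h0⟩ := Finset.mem_image.mp hσ
      exact ⟨D0, by simp [h0]⟩
    obtain ⟨m, hm, hmin⟩ := Finset.exists_min_image _ (fun D => l (c D) D) hVne
    have hm' : s m = σ := by simpa using hm
    have h2 : (Bad.filter (fun q => (⟨s q.2, t q.1⟩ : (_ : Finset N) × Finset N) = ⟨σ, τ⟩)).card ≤
        ((Finset.univ.filter (fun D => s D = σ)).erase m).card := by
      have key : ∀ q ∈ Bad.filter (fun q => (⟨s q.2, t q.1⟩ : (_ : Finset N) × Finset N) = ⟨σ, τ⟩),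
          s q.2 = σ ∧ t q.1 = τ ∧ q.1 = c q.2 ∧ q.2 ≠ m := by
        intro q hq
        rw [Finset.mem_filter, hBadmem] at hq
        obtain ⟨⟨⟨hq1, hq2⟩, hq3, hq4⟩, hq5⟩ := hq
        simp only [Sigma.mk.injEq, heq_eq_eq] at hq5
        obtain ⟨hq5, hq6⟩ := hq5
        have hqc : q.1 = c q.2 := huniq q.2 _ _ hq1 (hc _ hq5).2 (hq6.trans (hc _ hq5).1.symm)
        refine ⟨hq5, hq6, hqc, ?_⟩
        intro hqm
        obtain ⟨hp1, _, hp3⟩ := hp q.1 q.2 hq1 hq2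
        have hps : s (p q.1 q.2) = σ := hq3.symm.trans hq5
        have hpc : q.1 = c (p q.1 q.2) := huniq _ _ _ hp1 (hc _ hps).2 (hq6.trans (hc _ hps).1.symm)
        have := hmin (p q.1 q.2) (by simp [hps])
        rw [← hqm] at this
        simp only [← hpc, ← hqc] at this
        omega
      apply Finset.card_le_card_of_injOn (fun q => q.2)
      · intro q hq
        obtain ⟨h1, h2, h3, h4⟩ := key q hq
        simp [h1, h4]
      · intro q hq q' hq' h
        obtain ⟨h1, h2, h3, h4⟩ := key q hq
        obtain ⟨h1', h2', h3', h4'⟩ := key q' hq'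
        simp only at h
        exact Prod.ext (by rw [h3, h3', h]) h
    rw [Finset.card_erase_of_mem hm] at h2
    have := Finset.card_pos.mpr hVne
    simp only
    omega
  -- Keep
  have hKmem : ∀ q, q ∈ Keep ↔ (rel q.1 q.2 ∧ q.2 ≠ r q.1) ∧ ¬ (s q.2 = s (p q.1 q.2) ∧ t q.1 ≠ τ0 (s q.2)) := by
    intro q; simp only [Keep, Finset.mem_filter, hQmem]
  have hKeep : Keep.card ≤ 3 * Fintype.card V := by
    have hch : ∀ q : Keep, ∃ (e : GE) (u v : V), β (gtail e) = some u ∧ β (ghead e) = some v ∧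
        s(u, v) = s(p q.1.1 q.1.2, q.1.2) := by
      rintro ⟨q, hq⟩
      rw [hKmem] at hq
      obtain ⟨_, ⟨z, z', ⟨e, he⟩, h1, h2⟩, _⟩ := hp q.1 q.2 hq.1.1 hq.1.2
      rcases he with ⟨rfl, rfl⟩ | ⟨rfl, rfl⟩
      · exact ⟨e, _, _, h1, h2, rfl⟩
      · exact ⟨e, _, _, h2, h1, Sym2.eq_swap⟩
    choose e u v hu hv huv using hch
    rw [← Fintype.card_coe]
    refine planar_bound β hfin hconn (fun w => ?_) e u v hu hv ?_ ?_
    · obtain ⟨z, hz⟩ := M.neD w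
      exact ⟨z, hβD w z hz⟩
    · rintro ⟨q, hq⟩ h
      have h1 := huv ⟨q, hq⟩
      rw [h] at h1
      rw [hKmem] at hq
      have h2 := (hp q.1 q.2 hq.1.1 hq.1.2).2.2
      have h3 : p q.1 q.2 = q.2 := by
        rw [Sym2.eq_iff] at h1
        rcases h1 with ⟨a, b⟩ | ⟨a, b⟩
        · exact a.symm.trans b
        · exact b.symm.trans a
      rw [h3] at h2; omega
    · rintro ⟨⟨C, D⟩, hq⟩ ⟨⟨C', D'⟩, hq'⟩ h
      rw [huv, huv] at h
      simp only at h
      rw [hKmem] at hq hq'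
      simp only at hq hq'
      obtain ⟨⟨hr1, hn1⟩, hb1⟩ := hq
      obtain ⟨⟨hr2, hn2⟩, hb2⟩ := hq'
      obtain ⟨hp1, _, hl1⟩ := hp C D hr1 hn1
      obtain ⟨hp2, _, hl2⟩ := hp C' D' hr2 hn2
      have hinter : ∀ C D D', rel C D → rel C D' → s D ≠ s D' → t C = s D ∩ s D' := by
        intro C D D' h1 h2 h3
        apply Finset.eq_of_subset_of_card_le (Finset.subset_inter (hrel _ _ h1) (hrel _ _ h2))
        rw [ht]
        by_contra hcon
        have h4 : s D ∩ s D' = s D := Finset.eq_of_subset_of_card_le Finset.inter_subset_left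
          (by rw [hs]; omega)
        have h5 : s D ∩ s D' = s D' := Finset.eq_of_subset_of_card_le Finset.inter_subset_right
          (by rw [hs]; omega)
        exact h3 (h4.symm.trans h5)
      have htt : t C = t C' := by
        rw [Sym2.eq_iff] at h
        by_cases hss : s D = s (p C D)
        · have e1 : t C = τ0 (s D) := by by_contra hcon; exact hb1 ⟨hss, hcon⟩
          have hss' : s D' = s (p C' D') := by
            rcases h with ⟨a, b⟩ | ⟨a, b⟩
            · rw [← a, ← b]; exact hss
            · rw [← b, ← a]; exact hss.symm
          have e2 : t C' = τ0 (s D') := by by_contra hcon; exact hb2 ⟨hss', hcon⟩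
          rw [e1, e2]
          rcases h with ⟨a, b⟩ | ⟨a, b⟩
          · rw [b]
          · rw [← a, ← hss]
        · have hss' : s D' ≠ s (p C' D') := by
            rcases h with ⟨a, b⟩ | ⟨a, b⟩
            · rw [← a, ← b]; exact hss
            · rw [← b, ← a]; exact Ne.symm hss
          rw [hinter C D _ hr1 hp1 hss, hinter C' D' _ hr2 hp2 hss']
          rcases h with ⟨a, b⟩ | ⟨a, b⟩
          · rw [a, b]
          · rw [a, b, Finset.inter_comm]
      have hCC : C = C' := by
        rw [Sym2.eq_iff] at h
        rcases h with ⟨a, b⟩ | ⟨a, b⟩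
        · exact huniq D _ _ hr1 (by rw [b]; exact hr2) htt
        · exact huniq D _ _ hr1 (by rw [b]; exact hp2) htt
      subst hCC
      rw [Sym2.eq_iff] at h
      rcases h with ⟨a, b⟩ | ⟨a, b⟩
      · subst b; rfl
      · rw [a] at hl1; rw [← b] at hl2; omega
  have e1 : (k + 1) * Fintype.card V = k * Fintype.card V + Fintype.card V := by ring
  omega

end
end PlanarAux

namespace PlanarAux

open Topology Filter

abbrev E2 := EuclideanSpace ℝ (Fin 2)

def Sq (ε : ℝ) (z : ℤ × ℤ) : Set E2 := {x | |x 0 - ε * z.1| < ε ∧ |x 1 - ε * z.2| < ε}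

def Gd (ε : ℝ) (K : Set E2) : Set (ℤ × ℤ) := {z | (Sq ε z ∩ K).Nonempty}

lemma isOpen_Sq (ε : ℝ) (z : ℤ × ℤ) : IsOpen (Sq ε z) := by
  apply IsOpen.and
  · exact isOpen_lt (by fun_prop) continuous_const
  · exact isOpen_lt (by fun_prop) continuous_const

lemma Sq_dist {ε : ℝ} {z : ℤ × ℤ} {x y : E2} (hx : x ∈ Sq ε z) (hy : y ∈ Sq ε z) :
    dist x y < 4 * ε := by
  obtain ⟨h1, h2⟩ := hx
  obtain ⟨h3, h4⟩ := hy
  have hε : 0 < ε := lt_of_le_of_lt (abs_nonneg _) h1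
  rw [EuclideanSpace.dist_eq, Fin.sum_univ_two, Real.dist_eq, Real.dist_eq, sq_abs, sq_abs]
  rw [Real.sqrt_lt' (by positivity)]
  rw [abs_lt] at h1 h2 h3 h4
  nlinarith

lemma exists_Sq {ε : ℝ} (hε : 0 < ε) (x : E2) : ∃ z, x ∈ Sq ε z := by
  refine ⟨(⌊x 0 / ε⌋, ⌊x 1 / ε⌋), ?_, ?_⟩
  · have h1 := Int.floor_le (x 0 / ε)
    have h2 := Int.lt_floor_add_one (x 0 / ε)
    rw [le_div_iff₀ hε] at h1
    rw [div_lt_iff₀ hε] at h2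
    rw [abs_lt]; constructor <;> simp only <;> nlinarith
  · have h1 := Int.floor_le (x 1 / ε)
    have h2 := Int.lt_floor_add_one (x 1 / ε)
    rw [le_div_iff₀ hε] at h1
    rw [div_lt_iff₀ hε] at h2
    rw [abs_lt]; constructor <;> simp only <;> nlinarith

lemma near {ε a : ℝ} {i j : ℤ} (h1 : |a - ε * i| < ε) (h2 : |a - ε * j| < ε) :
    i = j ∨ i = j + 1 ∨ j = i + 1 := by
  have hε : 0 < ε := lt_of_le_of_lt (abs_nonneg _) h1
  rw [abs_lt] at h1 h2
  have h3 : (i : ℝ) < j + 2 := by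
    by_contra h; push Not at h; nlinarith
  have h4 : (j : ℝ) < i + 2 := by
    by_contra h; push Not at h; nlinarith
  have h3' : i < j + 2 := by exact_mod_cast h3
  have h4' : j < i + 2 := by exact_mod_cast h4
  omega

lemma adj_h (i j y : ℤ) (h : i = j ∨ i = j + 1 ∨ j = i + 1) :
    (i, y) = (j, y) ∨ GAdj (i, y) (j, y) := by
  rcases h with rfl | rfl | rfl
  · left; rfl
  · right; exact ⟨((j, y), false), Or.inr ⟨rfl, rfl⟩⟩
  · right; exact ⟨((i, y), false), Or.inl ⟨rfl, rfl⟩⟩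

lemma adj_v (i j y : ℤ) (h : i = j ∨ i = j + 1 ∨ j = i + 1) :
    (y, i) = (y, j) ∨ GAdj (y, i) (y, j) := by
  rcases h with rfl | rfl | rfl
  · left; rfl
  · right; exact ⟨((y, j), true), Or.inr ⟨rfl, rfl⟩⟩
  · right; exact ⟨((y, i), true), Or.inl ⟨rfl, rfl⟩⟩

lemma Gd_conn {ε : ℝ} (hε : 0 < ε) {K : Set E2} (hK : IsPreconnected K) : GConn GAdj (Gd ε K) := by
  intro S hS hne hcl
  by_contra hcon
  rw [Set.not_subset] at hcon
  obtain ⟨w, hw, hwS⟩ := hcon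
  obtain ⟨z, hz⟩ := hne
  obtain ⟨x, hxK, hxU, hxW⟩ := hK (⋃ z ∈ S, Sq ε z) (⋃ z ∈ Gd ε K \ S, Sq ε z)
    (isOpen_biUnion fun z _ => isOpen_Sq ε z) (isOpen_biUnion fun z _ => isOpen_Sq ε z) (by
      intro x hx
      obtain ⟨z, hz⟩ := exists_Sq hε x
      have hzG : z ∈ Gd ε K := ⟨x, hz, hx⟩
      by_cases h : z ∈ S
      · left; exact Set.mem_biUnion h hz
      · right; exact Set.mem_biUnion (show z ∈ Gd ε K \ S from ⟨hzG, h⟩) hz) (by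
      obtain ⟨x, hx1, hx2⟩ := hS hz
      exact ⟨x, hx2, Set.mem_biUnion hz hx1⟩) (by
      obtain ⟨x, hx1, hx2⟩ := hw
      exact ⟨x, hx2, Set.mem_biUnion (show w ∈ Gd ε K \ S from ⟨⟨x, hx1, hx2⟩, hwS⟩) hx1⟩)
  simp only [Set.mem_iUnion] at hxU hxW
  obtain ⟨⟨a, b⟩, haS, ha⟩ := hxU
  obtain ⟨⟨c, d⟩, hcS, hc⟩ := hxW
  have hmid : (c, b) ∈ Gd ε K := ⟨x, ⟨hc.1, ha.2⟩, hxK⟩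
  have h1 : (c, b) ∈ S := by
    rcases adj_h a c b (near ha.1 hc.1) with h | h
    · rw [← h]; exact haS
    · exact hcl _ haS _ hmid h
  have h2 : (c, d) ∈ S := by
    rcases adj_v b d c (near ha.2 hc.2) with h | h
    · rw [← h]; exact h1
    · exact hcl _ h1 _ hcS.1 h
  exact hcS.2 h2

lemma Gd_finite {ε : ℝ} (hε : 0 < ε) {K : Set E2} (hK : IsCompact K) : (Gd ε K).Finite := by
  obtain ⟨R, hR⟩ := hK.isBounded.exists_norm_le
  have hb : ∀ x ∈ K, ∀ i, |x i| ≤ R := by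
    intro x hx i
    have := PiLp.norm_apply_le x i
    rw [Real.norm_eq_abs] at this
    exact this.trans (hR x hx)
  have key : ∀ (a : ℝ) (i : ℤ), |a| ≤ R → |a - ε * i| < ε → i ∈ Set.Icc (-⌈R / ε + 1⌉) ⌈R / ε + 1⌉ := by
    intro a i h1 h2
    rw [abs_le] at h1
    rw [abs_lt] at h2
    have h3 := Int.le_ceil (R / ε + 1)
    have h4 : R / ε * ε = R := by field_simp
    have h5 : (i : ℝ) ≤ R / ε + 1 := by
      by_contra h; push Not at h; nlinarith
    have h6 : -(R / ε + 1) ≤ (i : ℝ) := by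
      by_contra h; push Not at h; nlinarith
    constructor
    · have : (-⌈R / ε + 1⌉ : ℝ) ≤ i := by linarith
      exact_mod_cast this
    · have : (i : ℝ) ≤ ⌈R / ε + 1⌉ := by linarith
      exact_mod_cast this
  apply ((Set.finite_Icc (-⌈R / ε + 1⌉) ⌈R / ε + 1⌉).prod (Set.finite_Icc (-⌈R / ε + 1⌉) ⌈R / ε + 1⌉)).subset
  rintro ⟨i, j⟩ ⟨x, ⟨h1, h2⟩, hx⟩
  exact ⟨key _ _ (hb x hx 0) h1, key _ _ (hb x hx 1) h2⟩

lemma Gd_disjoint {K L : Set E2} (hK : IsCompact K) (hL : IsCompact L) (h : Disjoint K L) :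
    ∀ᶠ ε in 𝓝[>] (0 : ℝ), Disjoint (Gd ε K) (Gd ε L) := by
  obtain ⟨δ, hδ, hd⟩ := h.exists_thickenings hK hL.isClosed
  have : ∀ᶠ ε in 𝓝[>] (0 : ℝ), ε < δ / 4 := by
    apply nhdsWithin_le_nhds
    exact gt_mem_nhds (by positivity)
  filter_upwards [this] with ε hε
  rw [Set.disjoint_left]
  rintro z ⟨x, hx, hxK⟩ ⟨y, hy, hyL⟩
  have := Sq_dist hx hy
  have hx1 := Metric.self_subset_thickening hδ _ hxK
  have hx2 : x ∈ Metric.thickening δ L := by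
    rw [Metric.mem_thickening_iff]; exact ⟨y, hyL, by linarith⟩
  exact Set.disjoint_left.mp hd hx1 hx2

lemma exists_compact_conn {D S : Set E2} (hD : IsOpen D) (hc : IsPathConnected D) (hS : IsCompact S)
    (hSD : S ⊆ D) {p : E2} (hp : p ∈ D) :
    ∃ K, IsCompact K ∧ IsPreconnected K ∧ K ⊆ D ∧ S ⊆ interior K ∧ p ∈ K := by
  classical
  have hr : ∀ x : E2, ∃ r > 0, x ∈ D → Metric.closedBall x r ⊆ D := by
    intro x
    by_cases hx : x ∈ D
    · obtain ⟨r, hr, h⟩ := Metric.nhds_basis_closedBall.mem_iff.mp (hD.mem_nhds hx)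
      exact ⟨r, hr, fun _ => h⟩
    · exact ⟨1, one_pos, fun h => absurd h hx⟩
  choose r hr0 hr using hr
  obtain ⟨T, hTS, hT⟩ := hS.elim_nhds_subcover (fun x => Metric.ball x (r x))
    (fun x _ => Metric.ball_mem_nhds x (hr0 x))
  have hj : ∀ x : E2, ∃ P : Set E2, x ∈ D → IsCompact P ∧ IsPreconnected P ∧ P ⊆ D ∧ p ∈ P ∧ x ∈ P := by
    intro x
    by_cases hx : x ∈ D
    · have hJ := hc.joinedIn p hp x hx
      let γ := hJ.somePath
      refine ⟨Set.range γ, fun _ => ⟨isCompact_range γ.continuous, isPreconnected_range γ.continuous, ?_,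
        ⟨0, γ.source⟩, ⟨1, γ.target⟩⟩⟩
      rintro _ ⟨t, rfl⟩
      exact hJ.somePath_mem t
    · exact ⟨∅, fun h => absurd h hx⟩
  choose P hP using hj
  refine ⟨{p} ∪ ⋃ x ∈ T, (P x ∪ Metric.closedBall x (r x)), ?_, ?_, ?_, ?_, Or.inl rfl⟩
  · apply isCompact_singleton.union
    apply T.isCompact_biUnion
    intro x hx
    exact (hP x (hSD (hTS x hx))).1.union (isCompact_closedBall x (r x))
  · have h1 : ({p} ∪ ⋃ x ∈ T, (P x ∪ Metric.closedBall x (r x))) =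
        ⋃₀ (insert {p} ((fun x => P x ∪ Metric.closedBall x (r x)) '' (T : Set E2))) := by
      rw [Set.sUnion_insert, Set.sUnion_image]; simp
    rw [h1]
    apply isPreconnected_sUnion p
    · rintro s (rfl | ⟨x, hx, rfl⟩)
      · rfl
      · exact Or.inl (hP x (hSD (hTS x hx))).2.2.2.1
    · rintro s (rfl | ⟨x, hx, rfl⟩)
      · exact isPreconnected_singleton
      · have h2 := hP x (hSD (hTS x hx))
        apply IsPreconnected.union x h2.2.2.2.2 (Metric.mem_closedBall_self (hr0 x).le) h2.2.1
        exact (convex_closedBall x (r x)).isPreconnected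
  · apply Set.union_subset (by simpa using hp)
    apply Set.iUnion₂_subset
    intro x hx
    exact Set.union_subset (hP x (hSD (hTS x hx))).2.2.1 (hr x (hSD (hTS x hx)))
  · refine hT.trans ?_
    apply interior_maximal
    · apply Set.iUnion₂_subset
      intro x hx
      refine Metric.ball_subset_closedBall.trans ?_
      refine Set.subset_union_of_subset_right ?_ _
      refine (Set.subset_union_right).trans
        (Set.subset_biUnion_of_mem (u := fun x => P x ∪ Metric.closedBall x (r x)) hx)
    · exact isOpen_biUnion fun x _ => Metric.isOpen_ball

theorem exists_gridModel {V K : Type*} [Finite V] [Finite K] (rel : K → V → Prop)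
    (Ds : V → Set E2) (Cs : K → Set E2)
    (oD : ∀ D, IsOpen (Ds D)) (cD : ∀ D, IsPathConnected (Ds D))
    (oC : ∀ C, IsOpen (Cs C)) (cC : ∀ C, IsPathConnected (Cs C))
    (hDD : ∀ D D', D ≠ D' → Disjoint (Ds D) (Ds D'))
    (hCD : ∀ C D, ¬ rel C D → Disjoint (Cs C) (Ds D))
    (hsub : ∀ C D, rel C D → Ds D ⊆ Cs C)
    (hCC : ∀ C C', C ≠ C' → ∀ z ∈ Cs C, z ∈ Cs C' → ∃ D, z ∈ Ds D)
    (hne : ∀ C, ∃ D, rel C D) : Nonempty (GridModel rel) := by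
  classical
  have hpt : ∀ D, ∃ p, p ∈ Ds D := fun D => (cD D).nonempty
  choose p hp using hpt
  have hKC : ∀ C, ∃ K, IsCompact K ∧ IsPreconnected K ∧ K ⊆ Cs C ∧ (∀ D, rel C D → p D ∈ K) := by
    intro C
    obtain ⟨D, hD⟩ := hne C
    obtain ⟨K, h1, h2, h3, h4, h5⟩ := exists_compact_conn (oC C) (cC C)
      (S := p '' {D | rel C D}) ((Set.toFinite _).image p).isCompact
      (by rintro _ ⟨D, hD, rfl⟩; exact hsub C D hD (hp D)) (hsub C D hD (hp D))
    exact ⟨K, h1, h2, h3, fun D hD => interior_subset (h4 ⟨D, hD, rfl⟩)⟩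
  choose KC kC1 kC2 kC3 kC4 using hKC
  have hKD : ∀ D, ∃ K, IsCompact K ∧ IsPreconnected K ∧ K ⊆ Ds D ∧
      (∀ C C', C ≠ C' → KC C ∩ KC C' ∩ Ds D ⊆ interior K) ∧ p D ∈ K := by
    intro D
    have hcomp : ∀ C C', C ≠ C' → IsCompact (KC C ∩ KC C' ∩ Ds D) := by
      intro C C' hne'
      have : KC C ∩ KC C' ∩ Ds D = (KC C ∩ KC C') \ ⋃ D' ∈ {D' | D' ≠ D}, Ds D' := by
        ext x
        constructor
        · rintro ⟨h1, h2⟩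
          refine ⟨h1, ?_⟩
          simp only [Set.mem_iUnion, not_exists]
          intro D' hD' hx
          exact Set.disjoint_left.mp (hDD D' D hD') hx h2
        · rintro ⟨h1, h2⟩
          refine ⟨h1, ?_⟩
          obtain ⟨D', hD'⟩ := hCC C C' hne' x (kC3 C h1.1) (kC3 C' h1.2)
          by_cases h : D' = D
          · rw [← h]; exact hD'
          · exact absurd (Set.mem_biUnion (show D' ∈ {D' | D' ≠ D} from h) hD') h2
      rw [this]
      apply ((kC1 C).inter (kC1 C')).diff
      exact isOpen_biUnion fun D' _ => oD D'
    obtain ⟨K, h1, h2, h3, h4, h5⟩ := exists_compact_conn (oD D) (cD D)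
      (S := ⋃ q : {q : K × K // q.1 ≠ q.2}, KC q.1.1 ∩ KC q.1.2 ∩ Ds D)
      (isCompact_iUnion fun q => hcomp _ _ q.2)
      (Set.iUnion_subset fun q => Set.inter_subset_right) (hp D)
    exact ⟨K, h1, h2, h3, fun C C' h => (Set.subset_iUnion
      (fun q : {q : _ × _ // q.1 ≠ q.2} => KC q.1.1 ∩ KC q.1.2 ∩ Ds D) ⟨(C, C'), h⟩).trans h4, h5⟩
  choose KD kD1 kD2 kD3 kD4 kD5 using hKD
  -- full compact sets
  let KK : K → Set E2 := fun C => KC C ∪ ⋃ D ∈ {D | rel C D}, KD D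
  have hKKc : ∀ C, IsCompact (KK C) := by
    intro C
    exact (kC1 C).union ((Set.toFinite _).isCompact_biUnion fun D _ => kD1 D)
  have hKKs : ∀ C, KK C ⊆ Cs C := by
    intro C
    exact Set.union_subset (kC3 C) (Set.iUnion₂_subset fun D hD => (kD3 D).trans (hsub C D hD))
  have hKKp : ∀ C, IsPreconnected (KK C) := by
    intro C
    have h1 : KK C = ⋃₀ ((fun D => KC C ∪ KD D) '' {D | rel C D}) := by
      rw [Set.sUnion_image]
      ext x
      simp only [KK, Set.mem_union, Set.mem_iUnion]
      constructor
      · rintro (h | ⟨D, hD, h⟩)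
        · obtain ⟨D, hD⟩ := hne C
          exact ⟨D, hD, Or.inl h⟩
        · exact ⟨D, hD, Or.inr h⟩
      · rintro ⟨D, hD, h | h⟩
        · exact Or.inl h
        · exact Or.inr ⟨D, hD, h⟩
    rw [h1]
    obtain ⟨D0, hD0⟩ := hne C
    apply isPreconnected_sUnion (p D0)
    · rintro _ ⟨D, hD, rfl⟩
      exact Or.inl (kC4 C D0 hD0)
    · rintro _ ⟨D, hD, rfl⟩
      exact IsPreconnected.union (p D) (kC4 C D hD) (kD5 D) (kC2 C) (kD2 D)
  let L : K → Set E2 := fun C => KC C \ ⋃ D, interior (KD D)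
  have hLc : ∀ C, IsCompact (L C) := fun C => (kC1 C).diff (isOpen_iUnion fun D => isOpen_interior)
  have hLd : ∀ C C', C ≠ C' → Disjoint (L C) (KC C') := by
    intro C C' h
    rw [Set.disjoint_left]
    rintro x ⟨hx1, hx2⟩ hx3
    obtain ⟨D, hD⟩ := hCC C C' h x (kC3 C hx1) (kC3 C' hx3)
    exact hx2 (Set.mem_iUnion.mpr ⟨D, kD4 D C C' h ⟨⟨hx1, hx3⟩, hD⟩⟩)
  have ev1 : ∀ᶠ ε in 𝓝[>] (0 : ℝ), ∀ D D', D ≠ D' → Disjoint (Gd ε (KD D)) (Gd ε (KD D')) := by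
    rw [eventually_all]; intro D
    rw [eventually_all]; intro D'
    by_cases h : D = D'
    · simp [h]
    · filter_upwards [Gd_disjoint (kD1 D) (kD1 D') ((hDD D D' h).mono (kD3 D) (kD3 D'))] with ε hε _
      exact hε
  have ev2 : ∀ᶠ ε in 𝓝[>] (0 : ℝ), ∀ C D, ¬ rel C D → Disjoint (Gd ε (KK C)) (Gd ε (KD D)) := by
    rw [eventually_all]; intro C
    rw [eventually_all]; intro D
    by_cases h : rel C D
    · simp [h]
    · filter_upwards [Gd_disjoint (hKKc C) (kD1 D) ((hCD C D h).mono (hKKs C) (kD3 D))] with ε hε _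
      exact hε
  have ev3 : ∀ᶠ ε in 𝓝[>] (0 : ℝ), ∀ C C', C ≠ C' → Disjoint (Gd ε (L C)) (Gd ε (KC C')) := by
    rw [eventually_all]; intro C
    rw [eventually_all]; intro C'
    by_cases h : C = C'
    · simp [h]
    · filter_upwards [Gd_disjoint (hLc C) (kC1 C') (hLd C C' h)] with ε hε _
      exact hε
  obtain ⟨ε, h1, h2, h3, hε⟩ := (ev1.and (ev2.and (ev3.and self_mem_nhdsWithin))).exists
  have hε : 0 < ε := hε
  have mono : ∀ {A B : Set E2}, A ⊆ B → Gd ε A ⊆ Gd ε B := by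
    rintro A B h z ⟨x, hx, hxA⟩
    exact ⟨x, hx, h hxA⟩
  refine ⟨⟨fun D => Gd ε (KD D), fun C => Gd ε (KK C), h1, h2, ?_, ?_, fun D => Gd_finite hε (kD1 D),
    fun C => Gd_finite hε (hKKc C), ?_, fun D => Gd_conn hε (kD2 D), fun C => Gd_conn hε (hKKp C)⟩⟩
  · intro C D hD
    apply mono
    exact (Set.subset_biUnion_of_mem (u := fun D => KD D) (show D ∈ {D | rel C D} from hD)).trans
      Set.subset_union_right
  · rintro C C' hne' z ⟨x, hx, hxC | hxC⟩ ⟨y, hy, hyC | hyC⟩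
    · by_contra hcon
      push Not at hcon
      have : z ∈ Gd ε (L C) := by
        refine ⟨x, hx, hxC, ?_⟩
        intro hx'
        obtain ⟨D, hD⟩ := Set.mem_iUnion.mp hx'
        exact hcon D ⟨x, hx, interior_subset hD⟩
      exact Set.disjoint_left.mp (h3 C C' hne') this ⟨y, hy, hyC⟩
    · simp only [Set.mem_iUnion] at hyC
      obtain ⟨D, _, hD⟩ := hyC
      exact ⟨D, y, hy, hD⟩
    · simp only [Set.mem_iUnion] at hxC
      obtain ⟨D, _, hD⟩ := hxC
      exact ⟨D, x, hx, hD⟩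
    · simp only [Set.mem_iUnion] at hxC
      obtain ⟨D, _, hD⟩ := hxC
      exact ⟨D, x, hx, hD⟩
  · intro D
    obtain ⟨z, hz⟩ := exists_Sq hε (p D)
    exact ⟨z, p D, hz, kD5 D⟩

end PlanarAux

namespace PlanarAux

lemma JoinedIn_comp_eq {S : Set E2} {x y z : E2} (h1 : JoinedIn S x z) (h2 : JoinedIn S y z) :
    pathComponentIn S x = pathComponentIn S y :=
  pathComponentIn_congr (h2.trans h1.symm)

lemma comp_eq_of_mem {S : Set E2} {x y z : E2} (h1 : z ∈ pathComponentIn S x)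
    (h2 : z ∈ pathComponentIn S y) : pathComponentIn S x = pathComponentIn S y :=
  JoinedIn_comp_eq h1 h2

lemma finite_card_comp {N : Type*} [Finite N] {P : Finset N → Prop} {b : ℕ} (B : Finset N → Set E2)
    (Q : Finset N × Set E2 → Prop)
    (hP : ∀ q, Q q → P q.1 ∧ ∃ x ∈ B q.1, q.2 = pathComponentIn (B q.1) x)
    (hB : ∀ σ, P σ → AtMostComponents b (B σ)) :
    Finite {q // Q q} ∧ Nat.card {q // Q q} ≤ Nat.card {σ // P σ} * b := by
  classical
  choose g hg using hB
  have hj : ∀ q : {q // Q q}, ∃ j : Fin b, ∃ x ∈ B q.1.1, q.1.2 = pathComponentIn (B q.1.1) x ∧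
      JoinedIn (B q.1.1) x (g q.1.1 (hP q.1 q.2).1 j) := by
    intro q
    obtain ⟨hp, x, hx, he⟩ := hP q.1 q.2
    obtain ⟨j, hj⟩ := hg q.1.1 hp x hx
    exact ⟨j, x, hx, he, hj⟩
  choose j hj using hj
  have hinj : Function.Injective
      (fun q : {q // Q q} => ((⟨q.1.1, (hP q.1 q.2).1⟩, j q) : {σ // P σ} × Fin b)) := by
    rintro q q' h
    have hh := Prod.mk.inj h
    have e1 : q.1.1 = q'.1.1 := congrArg Subtype.val hh.1
    have e2 : j q = j q' := hh.2
    obtain ⟨x, hx, he, h1⟩ := hj q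
    obtain ⟨y, hy, he', h2⟩ := hj q'
    apply Subtype.ext
    apply Prod.ext e1
    rw [he, he']
    obtain ⟨⟨σ, D⟩, hq⟩ := q
    obtain ⟨⟨σ', D'⟩, hq'⟩ := q'
    simp only at e1
    subst e1
    rw [← e2] at h2
    exact JoinedIn_comp_eq h1 h2
  refine ⟨Finite.of_injective _ hinj, ?_⟩
  have := Nat.card_le_card_of_injective _ hinj
  rwa [Nat.card_prod, Nat.card_fin] at this

lemma final_bound (b k n : ℕ) (hk : 2 * b < k)
    (A : Fin n → Set E2)
    (h1 : fNum A (k + 1) = 0)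
    (h2 : ∀ σ : Finset (Fin n), σ.card = k ∨ σ.card = k + 1 →
      IsOpen (⋂ i ∈ σ, A i) ∧ AtMostComponents b (⋂ i ∈ σ, A i)) :
    k * fNum A k ≤ 2 * (fNum A k * b) + fInd A (k - 1) * b := by
  classical
  set B : Finset (Fin n) → Set E2 := fun σ => ⋂ i ∈ σ, A i with hBdef
  have hmem : ∀ σ x, x ∈ B σ ↔ ∀ i ∈ σ, x ∈ A i := by intro σ x; simp [B]
  have hmono : ∀ {σ τ}, τ ⊆ σ → B σ ⊆ B τ := by
    intro σ τ h x hx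
    rw [hmem] at hx ⊢
    exact fun i hi => hx i (h hi)
  have hunion : ∀ {σ τ x}, x ∈ B σ → x ∈ B τ → x ∈ B (σ ∪ τ) := by
    intro σ τ x hx hy
    rw [hmem] at hx hy ⊢
    intro i hi
    rcases Finset.mem_union.mp hi with h | h
    · exact hx i h
    · exact hy i h
  have hno : ∀ σ x, k + 2 ≤ σ.card → x ∉ B σ := by
    intro σ x hc hx
    obtain ⟨ρ, hρ, hρc⟩ := Finset.exists_subset_card_eq hc
    unfold fNum at h1
    rw [Nat.card_eq_zero] at h1
    rcases h1 with h1 | h1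
    · exact h1.false ⟨ρ, hρc, x, hmono hρ hx⟩
    · exact h1.not_finite inferInstance
  let QV : Finset (Fin n) × Set E2 → Prop := fun q =>
    q.1.card = k + 1 ∧ ∃ x ∈ B q.1, q.2 = pathComponentIn (B q.1) x
  let QK : Finset (Fin n) × Set E2 → Prop := fun q =>
    q.1.card = k ∧ ∃ x ∈ B q.1, q.2 = pathComponentIn (B q.1) x ∧
      ∃ σ, q.1 ⊂ σ ∧ σ.card = k + 1 ∧ x ∈ B σ
  obtain ⟨fV, cV⟩ := finite_card_comp (b := b)
    (P := fun σ => σ.card = k + 1 ∧ (⋂ i ∈ σ, A i).Nonempty) B QV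
    (fun q hq => ⟨⟨hq.1, hq.2.imp fun x hx => hx.1⟩, hq.2⟩) (fun σ hσ => (h2 σ (Or.inr hσ.1)).2)
  obtain ⟨fK, cK⟩ := finite_card_comp (b := b)
    (P := fun τ => τ.card = k - 1 + 1 ∧ (⋂ i ∈ τ, A i).Nonempty ∧
      ∃ σ : Finset (Fin n), τ ⊂ σ ∧ σ.card = k - 1 + 2 ∧ (⋂ i ∈ σ, A i).Nonempty) B QK
    (by
      rintro q ⟨hc, x, hx, he, σ, hs, hsc, hxs⟩
      exact ⟨⟨by omega, ⟨x, hx⟩, σ, hs, by omega, ⟨x, hxs⟩⟩, x, hx, he⟩)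
    (fun σ hσ => (h2 σ (Or.inl (by have := hσ.1; omega))).2)
  let rel : {q // QK q} → {q // QV q} → Prop := fun C D => C.1.1 ⊆ D.1.1 ∧ D.1.2 ⊆ C.1.2
  have oD : ∀ D : {q // QV q}, IsOpen D.1.2 := by
    rintro ⟨⟨σ, D⟩, hc, x, hx, he⟩
    simp only at hc he ⊢
    rw [he]
    exact (h2 σ (Or.inr hc)).1.pathComponentIn x
  have oC : ∀ D : {q // QK q}, IsOpen D.1.2 := by
    rintro ⟨⟨σ, D⟩, hc, x, hx, he, -⟩
    simp only at hc he ⊢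
    rw [he]
    exact (h2 σ (Or.inl hc)).1.pathComponentIn x
  have cD : ∀ D : {q // QV q}, IsPathConnected D.1.2 := by
    rintro ⟨⟨σ, D⟩, hc, x, hx, he⟩
    simp only at hx he ⊢
    rw [he]
    exact isPathConnected_pathComponentIn hx
  have cC : ∀ D : {q // QK q}, IsPathConnected D.1.2 := by
    rintro ⟨⟨σ, D⟩, hc, x, hx, he, -⟩
    simp only at hx he ⊢
    rw [he]
    exact isPathConnected_pathComponentIn hx
  have subD : ∀ D : {q // QV q}, D.1.2 ⊆ B D.1.1 := by
    rintro ⟨⟨σ, D⟩, hc, x, hx, he⟩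
    simp only at he ⊢
    rw [he]
    exact pathComponentIn_subset
  have subC : ∀ D : {q // QK q}, D.1.2 ⊆ B D.1.1 := by
    rintro ⟨⟨σ, D⟩, hc, x, hx, he, -⟩
    simp only at he ⊢
    rw [he]
    exact pathComponentIn_subset
  have eqC : ∀ C : {q // QK q}, ∀ z ∈ C.1.2, C.1.2 = pathComponentIn (B C.1.1) z := by
    rintro ⟨⟨σ, D⟩, hc, x, hx, he, hrest⟩ z hz
    simp only at he hz ⊢
    rw [he] at hz ⊢
    exact (pathComponentIn_congr hz).symm
  have eqD : ∀ C : {q // QV q}, ∀ z ∈ C.1.2, C.1.2 = pathComponentIn (B C.1.1) z := by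
    rintro ⟨⟨σ, D⟩, hc, x, hx, he⟩ z hz
    simp only at he hz ⊢
    rw [he] at hz ⊢
    exact (pathComponentIn_congr hz).symm
  have card_union_lt : ∀ {σ τ : Finset (Fin n)}, ¬ τ ⊆ σ → σ.card + 1 ≤ (σ ∪ τ).card := by
    intro σ τ h
    apply Finset.card_lt_card
    refine Finset.ssubset_iff_subset_ne.mpr ⟨Finset.subset_union_left, fun he => h ?_⟩
    rw [he]; exact Finset.subset_union_right
  have hDD : ∀ D D' : {q // QV q}, D ≠ D' → Disjoint D.1.2 D'.1.2 := by
    intro D D' hne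
    rw [Set.disjoint_left]
    intro z hz hz'
    have hs : D'.1.1 ⊆ D.1.1 := by
      by_contra hs
      have h3 := card_union_lt hs
      have h4 := D.2.1
      exact hno _ z (by omega) (hunion (subD D hz) (subD D' hz'))
    have hs' := Finset.eq_of_subset_of_card_le hs (by rw [D.2.1, D'.2.1])
    apply hne
    apply Subtype.ext
    apply Prod.ext hs'.symm
    rw [eqD D z hz, eqD D' z hz', hs']
  have hrelz : ∀ (C : {q // QK q}) (D : {q // QV q}) z, z ∈ C.1.2 → z ∈ D.1.2 → rel C D := by
    intro C D z hz hz'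
    have hs : C.1.1 ⊆ D.1.1 := by
      by_contra hs
      have h3 := card_union_lt hs
      have h4 := D.2.1
      exact hno _ z (by omega) (hunion (subD D hz') (subC C hz))
    refine ⟨hs, ?_⟩
    rw [eqC C z hz, eqD D z hz']
    exact pathComponentIn_mono (hmono hs)
  have hCD : ∀ (C : {q // QK q}) (D : {q // QV q}), ¬ rel C D → Disjoint C.1.2 D.1.2 := by
    intro C D h
    rw [Set.disjoint_left]
    exact fun z hz hz' => h (hrelz C D z hz hz')
  have mkD : ∀ σ z, σ.card = k + 1 → z ∈ B σ → ∃ D : {q // QV q}, D.1.1 = σ ∧ z ∈ D.1.2 := by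
    intro σ z hc hz
    exact ⟨⟨(σ, pathComponentIn (B σ) z), hc, z, hz, rfl⟩, rfl, mem_pathComponentIn_self hz⟩
  have hCC : ∀ C C' : {q // QK q}, C ≠ C' → ∀ z ∈ C.1.2, z ∈ C'.1.2 →
      ∃ D : {q // QV q}, z ∈ D.1.2 := by
    intro C C' hne z hz hz'
    have hs : ¬ C'.1.1 ⊆ C.1.1 := by
      intro hs
      have hs' := Finset.eq_of_subset_of_card_le hs (by rw [C.2.1, C'.2.1])
      apply hne
      apply Subtype.ext
      apply Prod.ext hs'.symm
      rw [eqC C z hz, eqC C' z hz', hs']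
    have h3 := card_union_lt hs
    rw [C.2.1] at h3
    obtain ⟨ρ, hρ, hρc⟩ := Finset.exists_subset_card_eq h3
    obtain ⟨D, -, hD⟩ := mkD ρ z hρc (hmono hρ (hunion (subC C hz) (subC C' hz')))
    exact ⟨D, hD⟩
  have hne : ∀ C : {q // QK q}, ∃ D, rel C D := by
    intro C
    obtain ⟨hc, x, hx, he, σ, hs, hsc, hxs⟩ := C.2
    obtain ⟨D, -, hD⟩ := mkD σ x hsc hxs
    exact ⟨D, hrelz C D x (by rw [he]; exact mem_pathComponentIn_self hx) hD⟩
  obtain ⟨M⟩ := exists_gridModel rel (fun D => D.1.2) (fun C => C.1.2) oD cD oC cC hDD hCD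
    (fun C D h => h.2) hCC hne
  have iV : Fintype {q // QV q} := Fintype.ofFinite _
  have iK : Fintype {q // QK q} := Fintype.ofFinite _
  have key := count_bound M hne k (fun D => D.1.1) (fun C => C.1.1) (fun D => D.2.1)
    (fun C => C.2.1) (fun C D h => h.1)
    (by
      intro D τ hτ hτc
      obtain ⟨z, hz⟩ := (cD D).nonempty
      have hzτ := hmono hτ (subD D hz)
      let C : {q // QK q} := ⟨(τ, pathComponentIn (B τ) z), hτc, z, hzτ, rfl, D.1.1,
        Finset.ssubset_iff_subset_ne.mpr ⟨hτ, fun he => by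
          have h5 : (D.1.1).card = k + 1 := D.2.1
          have h6 : (D.1.1).card = k := by rw [← he]; exact hτc
          omega⟩, D.2.1, subD D hz⟩
      exact ⟨C, rfl, hrelz C D z (mem_pathComponentIn_self hzτ) hz⟩)
    (by
      intro D C C' h h' ht
      obtain ⟨z, hz⟩ := (cD D).nonempty
      apply Subtype.ext
      apply Prod.ext ht
      have ht' : C.1.1 = C'.1.1 := ht
      rw [eqC C z (h.2 hz), eqC C' z (h'.2 hz), ht'])
  have himg : (Finset.univ.image (fun D : {q // QV q} => D.1.1)).card = fNum A k := by
    unfold fNum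
    rw [← Nat.card_eq_finsetCard]
    apply Nat.card_congr
    apply Equiv.subtypeEquivRight
    intro σ
    rw [Finset.mem_image]
    constructor
    · rintro ⟨D, -, rfl⟩
      exact ⟨D.2.1, (cD D).nonempty.mono (subD D)⟩
    · rintro ⟨hc, z, hz⟩
      obtain ⟨D, hD, -⟩ := mkD σ z hc hz
      exact ⟨D, Finset.mem_univ _, hD⟩
  rw [himg, ← Nat.card_eq_fintype_card, ← Nat.card_eq_fintype_card] at key
  unfold fInd
  have cV' : Nat.card {q // QV q} ≤ fNum A k * b := cV
  omega

end PlanarAux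

/-- **Theorem (main, general b).** Let `b ≥ 2`, `k > 2b`, and let `𝒜 = {A_1, …, A_n}` be
subsets of `ℝ²` such that (i) `f_{k+1}(𝒜) = 0` and (ii) each `k`-wise and `(k+1)`-wise
intersection is open (possibly empty) with at most `b` path-connected components. Then
`f_k(𝒜) ≤ (b/(k-2b)) · f_{k-1}^{ind}(𝒜)`. -/
theorem planar_upper_bound_b_components (b k n : ℕ) (hb : 2 ≤ b) (hk : 2 * b < k)
    (A : Fin n → Set (EuclideanSpace ℝ (Fin 2)))
    (h1 : fNum A (k + 1) = 0)
    (h2 : ∀ σ : Finset (Fin n), σ.card = k ∨ σ.card = k + 1 →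
      IsOpen (⋂ i ∈ σ, A i) ∧ AtMostComponents b (⋂ i ∈ σ, A i)) :
    (fNum A k : ℝ) ≤ ((b : ℝ) / ((k : ℝ) - 2 * b)) * fInd A (k - 1) := by
  have key := PlanarAux.final_bound b k n hk A h1 h2
  have hpos : (0 : ℝ) < (k : ℝ) - 2 * b := by
    have : ((2 * b : ℕ) : ℝ) < k := by exact_mod_cast hk
    push_cast at this
    linarith
  have key' : (k : ℝ) * fNum A k ≤ 2 * (fNum A k * b) + fInd A (k - 1) * b := by
    exact_mod_cast key
  rw [div_mul_eq_mul_div, le_div_iff₀ hpos]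
  nlinarith
end

section
/- For every integer n ≥ 6 there exists a family 𝒜 = {A_1, …, A_n} of n open subsets of ℝ² such that: the intersection of every subfamily of 𝒜 is either empty or path-connected; f_3(𝒜) = 0; f_2(𝒜) ≥ C(n−1, 2) + (n²−6n+3)/3; all but one of the sets A_i are contractible; and every nonempty intersection of two or of three of the sets is contractible. -/
lemma contr_aux {E : Type*} [NormedAddCommGroup E] [NormedSpace ℝ E] {τ : Type*} [Fintype τ]
    (S : Set E) (U : τ → Set E) (c : τ → E) (hS : Convex ℝ S) (hSo : IsOpen S)
    (hne : S.Nonempty) (hU : ∀ t, IsOpen (U t)) (hst : ∀ t, StarConvex ℝ (c t) (U t))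
    (hcS : ∀ t, c t ∈ S)
    (hd : ∀ t t' x, x ∈ U t → x ∈ U t' → t = t') :
    ContractibleSpace ↥(S ∪ ⋃ t, U t) := by
  classical
  set A : Set E := S ∪ ⋃ t, U t with hA
  obtain ⟨p, hp⟩ := hne
  have key : ∀ t, ∃ φ : C(A, ℝ), (∀ x : A, (x : E) ∉ U t → φ x = 0) ∧
      (∀ x : A, (x : E) ∈ U t → (x : E) ∉ S → φ x = 1) ∧ ∀ x, φ x ∈ Set.Icc (0 : ℝ) 1 := by
    intro t
    have h1 : IsClosed {x : A | (x : E) ∉ U t} :=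
      ((hU t).preimage continuous_subtype_val).isClosed_compl
    have h2 : IsClosed {x : A | (x : E) ∈ U t ∧ (x : E) ∉ S} := by
      have : {x : A | (x : E) ∈ U t ∧ (x : E) ∉ S} =
          {x : A | (x : E) ∈ S ∪ ⋃ t' : {t' // t' ≠ t}, U t'}ᶜ := by
        ext x
        simp only [Set.mem_ofPred_eq, Set.mem_compl_iff, Set.mem_union, Set.mem_iUnion, not_or,
          not_exists]
        constructor
        · rintro ⟨h, h'⟩
          exact ⟨h', fun t' ht' => t'.2 (hd _ _ _ ht' h)⟩
        · rintro ⟨h, h'⟩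
          refine ⟨?_, h⟩
          rcases x.2 with hx | hx
          · exact absurd hx h
          · obtain ⟨t', ht'⟩ := Set.mem_iUnion.1 hx
            by_cases e : t' = t
            · exact e ▸ ht'
            · exact absurd ht' (h' ⟨t', e⟩)
      rw [this]
      exact ((hSo.union (isOpen_iUnion fun t' => hU _)).preimage
        continuous_subtype_val).isClosed_compl
    obtain ⟨φ, h0, h1', hI⟩ := exists_continuous_zero_one_of_isClosed h1 h2
      (Set.disjoint_left.2 fun x hx hx' => hx hx'.1)
    exact ⟨φ, fun x hx => h0 hx, fun x hx hx' => h1' ⟨hx, hx'⟩, hI⟩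
  choose φ h0 h1 hI using key
  let g : ℝ → A → E := fun s x => (x : E) + s • ∑ t, φ t x • (c t - (x : E))
  have gU : ∀ (s : ℝ) (x : A) t, (x : E) ∈ U t →
      g s x = (x : E) + (s * φ t x) • (c t - (x : E)) := by
    intro s x t hx
    have : ∑ t, φ t x • (c t - (x : E)) = φ t x • (c t - (x : E)) := by
      refine Finset.sum_eq_single t (fun t' _ ht' => ?_) (by simp)
      rw [h0 t' x (fun h => ht' (hd _ _ _ h hx)), zero_smul]
    simp only [g, this, smul_smul]
  have gn : ∀ (s : ℝ) (x : A), (∀ t, (x : E) ∉ U t) → g s x = x := by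
    intro s x hx
    have : ∑ t, φ t x • (c t - (x : E)) = 0 :=
      Finset.sum_eq_zero fun t _ => by rw [h0 t x (hx t), zero_smul]
    simp only [g, this, smul_zero, add_zero]
  have seg : ∀ (r : ℝ) (x y : E), x + r • (y - x) = r • y + (1 - r) • x := by
    intro r x y; module
  have gA : ∀ s ∈ Set.Icc (0:ℝ) 1, ∀ x : A, g s x ∈ A := by
    intro s hs x
    by_cases hx : ∃ t, (x : E) ∈ U t
    · obtain ⟨t, ht⟩ := hx
      rw [gU s x t ht, seg]
      refine Or.inr (Set.mem_iUnion.2 ⟨t, ?_⟩)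
      have a0 : 0 ≤ s * φ t x := mul_nonneg hs.1 (hI t x).1
      have a1 : s * φ t x ≤ 1 := mul_le_one₀ hs.2 (hI t x).1 (hI t x).2
      exact hst t ht a0 (by linarith) (by ring)
    · push Not at hx
      rw [gn s x hx]; exact x.2
  have g1 : ∀ x : A, g 1 x ∈ S := by
    intro x
    by_cases hx : ∃ t, (x : E) ∈ U t
    · obtain ⟨t, ht⟩ := hx
      rw [gU 1 x t ht, seg]
      by_cases hxS : (x : E) ∈ S
      · exact hS (hcS t) hxS (by simpa using (hI t x).1) (by simpa using (hI t x).2) (by ring)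
      · rw [h1 t x ht hxS]; simpa using hcS t
    · push Not at hx
      rw [gn 1 x hx]
      rcases x.2 with h | h
      · exact h
      · obtain ⟨t, ht⟩ := Set.mem_iUnion.1 h
        exact absurd ht (hx t)
  have gc : Continuous (fun q : ℝ × A => g q.1 q.2) := by
    simp only [g]; fun_prop
  let r1 : C(A, A) := ⟨fun x => ⟨g 1 x, Or.inl (g1 x)⟩,
    Continuous.subtype_mk (gc.comp (by fun_prop : Continuous fun x : A => ((1:ℝ), x))) _⟩
  let p' : A := ⟨p, Or.inl hp⟩
  have H1 : (ContinuousMap.id A).Homotopic r1 := by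
    refine ⟨⟨⟨fun q => ⟨g q.1 q.2, gA _ q.1.2 _⟩, ?_⟩, ?_, ?_⟩⟩
    · exact Continuous.subtype_mk (gc.comp
        (by fun_prop : Continuous fun q : unitInterval × A => ((q.1:ℝ), q.2))) _
    · intro x; ext1; simp [g]
    · intro x; ext1; simp [r1]
  have H2 : r1.Homotopic (ContinuousMap.const A p') := by
    refine ⟨⟨⟨fun q => ⟨(1 - (q.1 : ℝ)) • g 1 q.2 + (q.1 : ℝ) • p, Or.inl ?_⟩, ?_⟩, ?_, ?_⟩⟩
    · exact hS (g1 _) hp (by linarith [q.1.2.2]) q.1.2.1 (by ring)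
    · refine Continuous.subtype_mk ?_ _
      have := gc.comp (by fun_prop : Continuous fun q : unitInterval × A => ((1:ℝ), q.2))
      simp only [Function.comp_def] at this
      fun_prop
    · intro x; ext1; simp [r1]
    · intro x; ext1; simp [p']
  rw [contractible_iff_id_nullhomotopic]
  exact ⟨p', H1.trans H2⟩
lemma conv_lt {p q : ℝ} (hp : 0 ≤ p) (hq : 0 ≤ q) (hpq : p + q = 1) {u v r : ℝ}
    (hu : u < r) (hv : v < r) : p * u + q * v < r := by
  have e : r = p * r + q * r := by rw [← add_mul, hpq, one_mul]
  rcases hp.eq_or_lt with rfl | hp'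
  · have : q = 1 := by linarith
    subst this; linarith
  · have a1 : p * u < p * r := mul_lt_mul_of_pos_left hu hp'
    have a2 : q * v ≤ q * r := mul_le_mul_of_nonneg_left hv.le hq
    linarith


/-- Abstract arrangement of lines with a chosen family of empty triangles. -/
structure Arr (ι E : Type*) [NormedAddCommGroup E] [NormedSpace ℝ E] where
  f : ι → E → ℝ
  cont : ∀ i, Continuous (f i)
  aff : ∀ i x y (s t : ℝ), s + t = 1 → f i (s • x + t • y) = s * f i x + t * f i y
  tri : Finset (Finset ι)
  card : ∀ T ∈ tri, T.card = 3
  w : Finset ι → ι → ℝ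
  w_ne : ∀ T ∈ tri, ∀ i ∈ T, w T i ≠ 0
  sum_one : ∀ T ∈ tri, ∀ x, ∑ i ∈ T, f i x / w T i = 1
  surj : ∀ T ∈ tri, ∀ l : ι → ℝ, ∑ i ∈ T, l i = 1 → ∃ x, ∀ i ∈ T, f i x / w T i = l i
  gap : ∀ T ∈ tri, ∀ l, l ∉ T → ∃ ε > 0, ∃ s : ℝ, |s| = 1 ∧
    ∀ x, (∀ i ∈ T, 0 < f i x / w T i) → ε ≤ s * f l x
  pair : ∀ i j, ∃ x, f i x = 0 ∧ f j x = 0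
  triple : ∀ i j k, i ≠ j → i ≠ k → j ≠ k → ∃ ε > 0, ∀ x,
    ¬ (|f i x| < ε ∧ |f j x| < ε ∧ |f k x| < ε)

namespace Arr

variable {ι E : Type*} [NormedAddCommGroup E] [NormedSpace ℝ E] (G : Arr ι E)

/-- Normalised (barycentric) coordinate. -/
noncomputable def b (T : Finset ι) (i : ι) (x : E) : ℝ := G.f i x / G.w T i

/-- Open triangle. -/
def D (T : Finset ι) : Set E := {x | ∀ i ∈ T, 0 < G.b T i x}

/-- Strip together with the extensions into the triangles. -/
def A (ε : ℝ) (i : ι) : Set E :=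
  {x | |G.f i x| < ε ∨ ∃ T ∈ G.tri, i ∈ T ∧ x ∈ G.D T ∧ G.b T i x < 2 / 5}

/-- The special set. -/
def A0 (ε : ℝ) : Set E :=
  {x | (∃ i, |G.f i x| < ε) ∨ ∃ T ∈ G.tri, x ∈ G.D T ∧ ∃ i ∈ T, 2 / 5 < G.b T i x}

/-- A width that is small enough. -/
structure Good (ε : ℝ) : Prop where
  pos : 0 < ε
  g1 : ∀ T ∈ G.tri, ∀ l, l ∉ T → ∀ x ∈ G.D T, ε ≤ |G.f l x|
  g2 : ∀ T ∈ G.tri, ∀ l ∈ T, 5 * ε ≤ |G.w T l|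
  g3 : ∀ i j k, i ≠ j → i ≠ k → j ≠ k → ∀ x,
    ¬ (|G.f i x| < ε ∧ |G.f j x| < ε ∧ |G.f k x| < ε)

lemma exists_good [Finite ι] : ∃ ε, G.Good ε := by
  have key : ∀ {P : ℝ → Prop}, (∃ δ > 0, ∀ ε, ε ≤ δ → P ε) → ∀ᶠ ε in nhdsWithin (0:ℝ) (Set.Ioi 0), P ε := by
    rintro P ⟨δ, hδ, h⟩
    filter_upwards [Ioo_mem_nhdsGT hδ] with ε hε using h ε hε.2.le
  have e0 : ∀ᶠ ε in nhdsWithin (0:ℝ) (Set.Ioi 0), 0 < ε := by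
    filter_upwards [self_mem_nhdsWithin] with ε hε using hε
  have e1 : ∀ᶠ ε in nhdsWithin (0:ℝ) (Set.Ioi 0), ∀ T : Finset ι, ∀ l : ι, T ∈ G.tri → l ∉ T → ∀ x ∈ G.D T, ε ≤ |G.f l x| := by
    rw [Filter.eventually_all]; intro T
    rw [Filter.eventually_all]; intro l
    apply key
    by_cases hT : T ∈ G.tri ∧ l ∉ T
    · obtain ⟨δ, hδ, s, hs, h⟩ := G.gap T hT.1 l hT.2
      refine ⟨δ, hδ, fun ε hε _ _ x hx => ?_⟩
      calc ε ≤ s * G.f l x := hε.trans (h x hx)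
        _ ≤ |s * G.f l x| := le_abs_self _
        _ = _ := by rw [abs_mul, hs, one_mul]
    · exact ⟨1, one_pos, fun ε _ h1 h2 => absurd ⟨h1, h2⟩ hT⟩
  have e2 : ∀ᶠ ε in nhdsWithin (0:ℝ) (Set.Ioi 0), ∀ T : Finset ι, ∀ l : ι, T ∈ G.tri → l ∈ T → 5 * ε ≤ |G.w T l| := by
    rw [Filter.eventually_all]; intro T
    rw [Filter.eventually_all]; intro l
    apply key
    by_cases hT : T ∈ G.tri ∧ l ∈ T
    · refine ⟨|G.w T l| / 5, by have := G.w_ne T hT.1 l hT.2; positivity, fun ε hε _ _ => by linarith⟩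
    · exact ⟨1, one_pos, fun ε _ h1 h2 => absurd ⟨h1, h2⟩ hT⟩
  have e3 : ∀ᶠ ε in nhdsWithin (0:ℝ) (Set.Ioi 0), ∀ i j k : ι, i ≠ j → i ≠ k → j ≠ k → ∀ x,
    ¬ (|G.f i x| < ε ∧ |G.f j x| < ε ∧ |G.f k x| < ε) := by
    rw [Filter.eventually_all]; intro i
    rw [Filter.eventually_all]; intro j
    rw [Filter.eventually_all]; intro k
    apply key
    by_cases h : i ≠ j ∧ i ≠ k ∧ j ≠ k
    · obtain ⟨δ, hδ, h⟩ := G.triple i j k h.1 h.2.1 h.2.2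
      exact ⟨δ, hδ, fun ε hε _ _ _ x hx => h x ⟨hx.1.trans_le hε, hx.2.1.trans_le hε, hx.2.2.trans_le hε⟩⟩
    · exact ⟨1, one_pos, fun ε _ h1 h2 h3 => absurd ⟨h1, h2, h3⟩ h⟩
  obtain ⟨ε, h0, h1, h2, h3⟩ := (e0.and (e1.and (e2.and e3))).exists
  exact ⟨ε, h0, fun T hT l hl => h1 T l hT hl, fun T hT l hl => h2 T l hT hl, h3⟩

lemma b_cont (T : Finset ι) (i : ι) : Continuous (G.b T i) := (G.cont i).div_const _

lemma b_aff (T : Finset ι) (i : ι) (x y : E) (s t : ℝ) (h : s + t = 1) :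
    G.b T i (s • x + t • y) = s * G.b T i x + t * G.b T i y := by
  simp only [b, G.aff i x y s t h]; ring

lemma D_open (T : Finset ι) : IsOpen (G.D T) := by
  have : G.D T = ⋂ i ∈ T, {x | 0 < G.b T i x} := by ext; simp [D]
  rw [this]
  exact isOpen_biInter_finset fun i _ => isOpen_lt continuous_const (G.b_cont T i)

lemma A_open (ε : ℝ) (i : ι) : IsOpen (G.A ε i) := by
  have : G.A ε i = {x | |G.f i x| < ε} ∪ ⋃ T ∈ {T | T ∈ G.tri ∧ i ∈ T},
      (G.D T ∩ {x | G.b T i x < 2 / 5}) := by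
    ext x; simp only [A, Set.mem_ofPred_eq, Set.mem_union, Set.mem_iUnion, Set.mem_inter_iff, exists_prop, and_assoc]
  rw [this]
  exact (isOpen_lt (G.cont i).abs continuous_const).union (isOpen_biUnion fun T _ =>
    (G.D_open T).inter (isOpen_lt (G.b_cont T i) continuous_const))

lemma A0_open (ε : ℝ) : IsOpen (G.A0 ε) := by
  have : G.A0 ε = (⋃ i, {x | |G.f i x| < ε}) ∪ ⋃ T ∈ G.tri,
      (G.D T ∩ ⋃ i ∈ T, {x | 2 / 5 < G.b T i x}) := by
    ext x; simp only [A0, Set.mem_ofPred_eq, Set.mem_union, Set.mem_iUnion, Set.mem_inter_iff, exists_prop]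
  rw [this]
  exact (isOpen_iUnion fun i => isOpen_lt (G.cont i).abs continuous_const).union
    (isOpen_biUnion fun T _ => (G.D_open T).inter (isOpen_biUnion fun i _ =>
      isOpen_lt continuous_const (G.b_cont T i)))

lemma f_eq {T : Finset ι} (hT : T ∈ G.tri) {i : ι} (hi : i ∈ T) (x : E) :
    G.f i x = G.b T i x * G.w T i := by
  rw [b, div_mul_cancel₀ _ (G.w_ne T hT i hi)]

/-- Points of the triangle close to the sides in `R`. -/
lemma pt {T : Finset ι} (hT : T ∈ G.tri) (R : Finset ι) (hR : R ⊆ T) (h1 : 1 ≤ R.card)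
    (h2 : R.card ≤ 2) (δ : ℝ) (hδ : 0 < δ) (hδ' : δ < 1 / 10) :
    ∃ c ∈ G.D T, (∀ i ∈ R, G.b T i c = δ) ∧ ∀ i ∈ T, i ∉ R → 2 / 5 < G.b T i c := by
  classical
  have hc := G.card T hT
  have hval : 2 / 5 < (1 - R.card * δ) / (3 - R.card) := by
    have : R.card = 1 ∨ R.card = 2 := by omega
    rcases this with h | h <;> rw [h] <;> norm_num <;> linarith
  obtain ⟨c, hc⟩ := G.surj T hT
    (fun i => if i ∈ R then δ else (1 - R.card * δ) / (3 - R.card)) (by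
      have e1 : T.filter (· ∈ R) = R := by
        ext i; simp only [Finset.mem_filter]; exact ⟨fun h => h.2, fun h => ⟨hR h, h⟩⟩
      have e2 : ((T.filter (fun i => ¬ i ∈ R)).card : ℝ) = 3 - R.card := by
        have := Finset.card_filter_add_card_filter_not (s := T) (· ∈ R)
        rw [e1, hc] at this
        rw [eq_sub_iff_add_eq, add_comm]
        exact_mod_cast this
      rw [Finset.sum_ite, e1, Finset.sum_const, Finset.sum_const, nsmul_eq_mul, nsmul_eq_mul, e2]
      have : (3 : ℝ) - R.card ≠ 0 := by
        have : (R.card : ℝ) ≤ 2 := by exact_mod_cast h2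
        intro h; linarith
      field_simp
      ring)
  refine ⟨c, ?_, ?_, ?_⟩
  · intro i hi
    have := hc i hi
    rw [b, this]
    split_ifs
    · exact hδ
    · linarith
  · intro i hi
    have := hc i (hR hi)
    rw [b, this, if_pos hi]
  · intro i hi hi'
    have := hc i hi
    rw [b, this, if_neg hi']; exact hval

lemma D_sign {T : Finset ι} (hT : T ∈ G.tri) {x y : E} (hx : x ∈ G.D T) (hy : y ∈ G.D T) (i : ι) :
    0 < G.f i x * G.f i y := by
  by_cases hi : i ∈ T
  · rw [G.f_eq hT hi, G.f_eq hT hi]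
    have h1 := hx i hi
    have h2 := hy i hi
    have h3 := G.w_ne T hT i hi
    have : G.b T i x * G.w T i * (G.b T i y * G.w T i) = G.b T i x * G.b T i y * (G.w T i)^2 := by
      ring
    rw [this]; positivity
  · obtain ⟨ε, hε, s, hs, h⟩ := G.gap T hT i hi
    have h1 := h x hx
    have h2 := h y hy
    have hs2 : s * s = 1 := by rw [← abs_mul_abs_self, hs]; norm_num
    have : G.f i x * G.f i y = (s * G.f i x) * (s * G.f i y) := by linear_combination (-G.f i x * G.f i y) * hs2
    rw [this]
    exact mul_pos (hε.trans_le h1) (hε.trans_le h2)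

lemma D_disj {T T' : Finset ι} (hT : T ∈ G.tri) (hT' : T' ∈ G.tri) {x : E} (hx : x ∈ G.D T)
    (hx' : x ∈ G.D T') : T = T' := by
  by_contra hne
  obtain ⟨l, hl', hl⟩ : ∃ l ∈ T', l ∉ T := by
    by_contra! h
    exact hne (Finset.eq_of_subset_of_card_le h (by rw [G.card T hT, G.card T' hT'])).symm
  obtain ⟨ε, hε, s, hs, h⟩ := G.gap T hT l hl
  have hw := abs_pos.2 (G.w_ne T' hT' l hl')
  obtain ⟨y, hy, hyl, -⟩ := G.pt hT' {l} (by simpa using hl') (by simp) (by simp)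
    (min (1/20) (ε / (2 * |G.w T' l|))) (by positivity) (by
      exact lt_of_le_of_lt (min_le_left _ _) (by norm_num))
  have hyT : y ∈ G.D T := by
    intro i hi
    have h1 := G.D_sign hT' hx' hy i
    rw [G.f_eq hT hi, G.f_eq hT hi] at h1
    have h2 := hx i hi
    have h3 := G.w_ne T hT i hi
    have : G.b T i x * G.w T i * (G.b T i y * G.w T i) = (G.b T i x * (G.w T i)^2) * G.b T i y := by
      ring
    rw [this] at h1
    exact (pos_iff_pos_of_mul_pos h1).1 (by positivity)
  have h1 := h y hyT
  have h2 : |G.f l y| ≤ ε / 2 := by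
    rw [G.f_eq hT' hl', hyl l (by simp), abs_mul, abs_of_pos (by positivity)]
    calc _ ≤ ε / (2 * |G.w T' l|) * |G.w T' l| := by gcongr; exact min_le_right _ _
      _ = ε / 2 := by field_simp
  have h3 : s * G.f l y ≤ |G.f l y| := by
    calc _ ≤ |s * G.f l y| := le_abs_self _
      _ = _ := by rw [abs_mul, hs, one_mul]
  linarith

section
variable {G} {ε : ℝ}

lemma b_small (hg : G.Good ε) {T : Finset ι} (hT : T ∈ G.tri) {i : ι} (hi : i ∈ T) {x : E} (hx : |G.f i x| < ε) :
    G.b T i x < 1 / 5 := by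
  have h2 := hg.g2 T hT i hi
  have h3 := abs_pos.2 (G.w_ne T hT i hi)
  calc G.b T i x ≤ |G.b T i x| := le_abs_self _
    _ = |G.f i x| / |G.w T i| := abs_div _ _
    _ < 1 / 5 := by rw [div_lt_iff₀ h3]; linarith

lemma memA (hg : G.Good ε) {T : Finset ι} (hT : T ∈ G.tri) {x : E} (hx : x ∈ G.D T) (i : ι) :
    x ∈ G.A ε i ↔ i ∈ T ∧ G.b T i x < 2 / 5 := by
  constructor
  · rintro (h | ⟨T', hT', hi, hx', h⟩)
    · have hi : i ∈ T := by
        by_contra hi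
        exact absurd (hg.g1 T hT i hi x hx) (not_le.2 h)
      exact ⟨hi, (b_small hg hT hi h).trans (by norm_num)⟩
    · obtain rfl := G.D_disj hT hT' hx hx'
      exact ⟨hi, h⟩
  · rintro ⟨hi, h⟩
    exact Or.inr ⟨T, hT, hi, hx, h⟩

lemma memA0 (hg : G.Good ε) {T : Finset ι} (hT : T ∈ G.tri) {x : E} (hx : x ∈ G.D T) :
    x ∈ G.A0 ε ↔ ∃ i ∈ T, 2 / 5 < G.b T i x := by
  classical
  constructor
  · rintro (⟨i, h⟩ | ⟨T', hT', hx', h⟩)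
    · have hi : i ∈ T := by
        by_contra hi
        exact absurd (hg.g1 T hT i hi x hx) (not_le.2 h)
      have h1 := b_small hg hT hi h
      by_contra! hcon
      have h2 : ∑ j ∈ T, G.b T j x = 1 := G.sum_one T hT x
      rw [← Finset.add_sum_erase T _ hi] at h2
      have h3 : ∑ j ∈ T.erase i, G.b T j x ≤ (T.erase i).card • (2/5 : ℝ) :=
        Finset.sum_le_card_nsmul _ _ _ fun j hj => hcon j (Finset.mem_of_mem_erase hj)
      rw [Finset.card_erase_of_mem hi, G.card T hT] at h3
      norm_num at h3
      linarith
    · obtain rfl := G.D_disj hT hT' hx hx'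
      exact h
  · intro h
    exact Or.inr ⟨T, hT, hx, h⟩

lemma memA' {x : E} (hx : ∀ T ∈ G.tri, x ∉ G.D T) (i : ι) :
    x ∈ G.A ε i ↔ |G.f i x| < ε := by
  constructor
  · rintro (h | ⟨T', hT', hi, hx', h⟩)
    · exact h
    · exact absurd hx' (hx _ hT')
  · exact Or.inl

lemma mem_of_strip {x : E} {i : ι} (h : |G.f i x| < ε) : x ∈ G.A ε i ∧ x ∈ G.A0 ε :=
  ⟨Or.inl h, Or.inl ⟨i, h⟩⟩

lemma strip_convex (i : ι) : Convex ℝ {x | |G.f i x| < ε} := by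
  intro x hx y hy s t hs ht hst
  simp only [Set.mem_ofPred_eq] at *
  rw [G.aff i x y s t hst, abs_lt]
  rw [abs_lt] at hx hy
  rcases hs.eq_or_lt with rfl | hs'
  · have : t = 1 := by linarith
    subst this; constructor <;> linarith
  · constructor <;> nlinarith

/-- Contractibility of intersections of one or two of the ordinary sets, possibly with `A0`. -/
lemma contrR [Finite ι] (hg : G.Good ε) (R : Finset ι) (h1 : 1 ≤ R.card) (h2 : R.card ≤ 2) (z : Prop) :
    ContractibleSpace ↥{x | (z → x ∈ G.A0 ε) ∧ ∀ i ∈ R, x ∈ G.A ε i} := by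
  classical
  have := Fintype.ofFinite ι
  let S : Set E := {x | ∀ i ∈ R, |G.f i x| < ε}
  let τ := {T // T ∈ G.tri ∧ R ⊆ T}
  let U : τ → Set E := fun t => {x | x ∈ G.D t.1 ∧ (∀ i ∈ R, G.b t.1 i x < 2 / 5) ∧
    (z → ∃ i ∈ t.1, 2 / 5 < G.b t.1 i x)}
  have hW : ∃ M : ℝ, 0 < M ∧ ∀ T : Finset ι, ∀ i, |G.w T i| ≤ M := by
    refine ⟨1 + ∑ T : Finset ι, ∑ i, |G.w T i|, by positivity, fun T i => ?_⟩
    have a1 : |G.w T i| ≤ ∑ i, |G.w T i| :=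
      Finset.single_le_sum (f := fun i => |G.w T i|) (fun _ _ => abs_nonneg _) (Finset.mem_univ i)
    have a2 : ∑ i, |G.w T i| ≤ ∑ T : Finset ι, ∑ i, |G.w T i| :=
      Finset.single_le_sum (f := fun T => ∑ i, |G.w T i|)
        (fun _ _ => Finset.sum_nonneg fun _ _ => abs_nonneg _) (Finset.mem_univ T)
    linarith
  obtain ⟨M, hM, hW⟩ := hW
  have hpos := hg.pos
  have hc : ∀ t : τ, ∃ c ∈ G.D t.1, (∀ i ∈ R, G.b t.1 i c = min (1/20) (ε / (2 * M))) ∧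
      ∀ i ∈ t.1, i ∉ R → 2 / 5 < G.b t.1 i c := fun t =>
    G.pt t.2.1 R t.2.2 h1 h2 _ (by positivity) (lt_of_le_of_lt (min_le_left _ _) (by norm_num))
  choose c hcD hcR hcT using hc
  have hδ : min (1/20) (ε / (2 * M)) < 2/5 := lt_of_le_of_lt (min_le_left _ _) (by norm_num)
  have heq : {x | (z → x ∈ G.A0 ε) ∧ ∀ i ∈ R, x ∈ G.A ε i} = S ∪ ⋃ t, U t := by
    ext x
    constructor
    · rintro ⟨hz, hx⟩
      by_cases hD : ∃ T ∈ G.tri, x ∈ G.D T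
      · obtain ⟨T, hT, hxT⟩ := hD
        have hx' := fun i hi => (memA hg hT hxT i).1 (hx i hi)
        exact Or.inr (Set.mem_iUnion.2 ⟨⟨T, hT, fun i hi => (hx' i hi).1⟩, hxT,
          fun i hi => (hx' i hi).2, fun h => (memA0 hg hT hxT).1 (hz h)⟩)
      · push Not at hD
        exact Or.inl fun i hi => (memA' hD i).1 (hx i hi)
    · rintro (h | h)
      · obtain ⟨i, hi⟩ := Finset.card_pos.1 h1
        exact ⟨fun _ => (mem_of_strip (h i hi)).2, fun i hi => (mem_of_strip (h i hi)).1⟩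
      · obtain ⟨⟨T, hT, hRT⟩, hxT, ha, hb⟩ := Set.mem_iUnion.1 h
        exact ⟨fun hz => (memA0 hg hT hxT).2 (hb hz),
          fun i hi => (memA hg hT hxT i).2 ⟨hRT hi, ha i hi⟩⟩
  rw [heq]
  have hSeq : S = ⋂ i ∈ R, {x | |G.f i x| < ε} := by ext; simp [S]
  refine contr_aux S U c ?_ ?_ ?_ ?_ ?_ ?_ ?_
  · rw [hSeq]; exact convex_iInter fun i => convex_iInter fun _ => strip_convex i
  · rw [hSeq]; exact isOpen_biInter_finset fun i _ => isOpen_lt (G.cont i).abs continuous_const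
  · have : R.card = 1 ∨ R.card = 2 := by omega
    rcases this with h | h
    · obtain ⟨i, rfl⟩ := Finset.card_eq_one.1 h
      obtain ⟨x, hx, -⟩ := G.pair i i
      exact ⟨x, by simp [S, hx, hpos]⟩
    · obtain ⟨i, j, -, rfl⟩ := Finset.card_eq_two.1 h
      obtain ⟨x, hx, hx'⟩ := G.pair i j
      exact ⟨x, by simp [S, hx, hx', hpos]⟩
  · intro t
    have : U t = G.D t.1 ∩ ((⋂ i ∈ R, {x | G.b t.1 i x < 2 / 5}) ∩
        (if z then ⋃ i ∈ t.1, {x | 2 / 5 < G.b t.1 i x} else Set.univ)) := by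
      ext x
      by_cases hz : z <;> simp only [U, hz, Set.mem_ofPred_eq, Set.mem_iInter, Set.mem_iUnion, Set.mem_inter_iff, exists_prop, if_true, if_false, Set.mem_univ, true_imp_iff, false_imp_iff, and_true]
    rw [this]
    refine (G.D_open _).inter ((isOpen_biInter_finset fun i _ =>
      isOpen_lt (G.b_cont _ i) continuous_const).inter ?_)
    split_ifs
    · exact isOpen_biUnion fun i _ => isOpen_lt continuous_const (G.b_cont _ i)
    · exact isOpen_univ
  · rintro t x ⟨hxD, hxR, hxz⟩ p q hp hq hpq
    have conv1 : ∀ {u v r : ℝ}, u < r → v < r → p * u + q * v < r :=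
      conv_lt hp hq hpq
    have conv2 : ∀ {u v r : ℝ}, r < u → r < v → r < p * u + q * v := by
      intro u v r hu hv
      have := @conv1 (-u) (-v) (-r) (by linarith) (by linarith)
      linarith
    refine ⟨fun i hi => ?_, fun i hi => ?_, fun hz => ?_⟩
    · rw [G.b_aff _ _ _ _ _ _ hpq]
      exact conv2 (hcD t i hi) (hxD i hi)
    · rw [G.b_aff _ _ _ _ _ _ hpq]
      exact conv1 (by rw [hcR t i hi]; exact hδ) (hxR i hi)
    · obtain ⟨i, hi, hb⟩ := hxz hz
      refine ⟨i, hi, ?_⟩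
      rw [G.b_aff _ _ _ _ _ _ hpq]
      exact conv2 (hcT t i hi fun hiR => absurd (hxR i hiR) (not_lt.2 hb.le)) hb
  · intro t i hi
    rw [G.f_eq t.2.1 (t.2.2 hi), hcR t i hi, abs_mul, abs_of_pos (by positivity)]
    calc _ ≤ ε / (2 * M) * M := by gcongr; exacts [min_le_right _ _, hW _ _]
      _ = ε / 2 := by field_simp
      _ < ε := by linarith
  · intro t t' x hx hx'
    exact Subtype.ext (G.D_disj t.2.1 t'.2.1 hx.1 hx'.1)

/-- A triple intersection lies in the triangle. -/
lemma triple_sub (hg : G.Good ε) {R : Finset ι} (h3 : 3 ≤ R.card) {x : E} (hx : ∀ i ∈ R, x ∈ G.A ε i) :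
    R ∈ G.tri ∧ x ∈ G.D R ∧ (∀ i ∈ R, G.b R i x < 2 / 5) ∧ x ∉ G.A0 ε := by
  by_cases hD : ∃ T ∈ G.tri, x ∈ G.D T
  · obtain ⟨T, hT, hxT⟩ := hD
    have hx' := fun i hi => (memA hg hT hxT i).1 (hx i hi)
    have : R = T := Finset.eq_of_subset_of_card_le (fun i hi => (hx' i hi).1)
      (by rw [G.card T hT]; exact h3)
    subst this
    refine ⟨hT, hxT, fun i hi => (hx' i hi).2, fun h => ?_⟩
    obtain ⟨i, hi, hb⟩ := (memA0 hg hT hxT).1 h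
    exact absurd (hx' i hi).2 (not_lt.2 hb.le)
  · push Not at hD
    obtain ⟨i, j, k, hi, hj, hk, hij, hik, hjk⟩ := Finset.two_lt_card_iff.1 h3
    exact absurd ⟨(memA' hD i).1 (hx i hi), (memA' hD j).1 (hx j hj), (memA' hD k).1 (hx k hk)⟩
      (hg.g3 i j k hij hik hjk x)

lemma triple_ne (hg : G.Good ε) {R : Finset ι} (hR : R ∈ G.tri) : ∃ x, ∀ i ∈ R, x ∈ G.A ε i := by
  obtain ⟨x, hx⟩ := G.surj R hR (fun _ => 1 / 3) (by simp [G.card R hR])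
  have hxD : x ∈ G.D R := fun i hi => by rw [b, hx i hi]; norm_num
  exact ⟨x, fun i hi => (memA hg hR hxD i).2 ⟨hi, by rw [b, hx i hi]; norm_num⟩⟩

lemma contr3 (hg : G.Good ε) {R : Finset ι} (hR : R ∈ G.tri) :
    ContractibleSpace ↥{x | ∀ i ∈ R, x ∈ G.A ε i} := by
  have heq : {x | ∀ i ∈ R, x ∈ G.A ε i} = {x | ∀ i ∈ R, 0 < G.b R i x ∧ G.b R i x < 2 / 5} := by
    ext x
    constructor
    · intro hx
      have := triple_sub hg (G.card R hR).ge hx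
      exact fun i hi => ⟨this.2.1 i hi, this.2.2.1 i hi⟩
    · intro hx i hi
      exact (memA hg hR (fun i hi => (hx i hi).1) i).2 ⟨hi, (hx i hi).2⟩
  have hne : {x | ∀ i ∈ R, x ∈ G.A ε i}.Nonempty := triple_ne hg hR
  rw [heq] at hne ⊢
  refine Convex.contractibleSpace ?_ hne
  intro x hx y hy p q hp hq hpq i hi
  have conv1 : ∀ {u v r : ℝ}, u < r → v < r → p * u + q * v < r :=
    conv_lt hp hq hpq
  rw [G.b_aff _ _ _ _ _ _ hpq]
  refine ⟨?_, conv1 (hx i hi).2 (hy i hi).2⟩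
  have := @conv1 (-G.b R i x) (-G.b R i y) 0 (by linarith [(hx i hi).1]) (by linarith [(hy i hi).1])
  linarith

lemma A0_path [Finite ι] [Nonempty ι] (hg : G.Good ε) : IsPathConnected (G.A0 ε) := by
  classical
  have hpos := hg.pos
  have str : ∀ i, IsPathConnected {x | |G.f i x| < ε} := by
    intro i
    obtain ⟨x, hx, -⟩ := G.pair i i
    exact (strip_convex i).isPathConnected ⟨x, by simp [hx, hpos]⟩
  have sub : ∀ i, {x | |G.f i x| < ε} ⊆ G.A0 ε := fun i x hx => (mem_of_strip hx).2
  obtain ⟨i₀⟩ := ‹Nonempty ι›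
  obtain ⟨x₀, hx₀, -⟩ := G.pair i₀ i₀
  have hx₀' : |G.f i₀ x₀| < ε := by simp [hx₀, hpos]
  have st : ∀ i x, |G.f i x| < ε → JoinedIn (G.A0 ε) x₀ x := by
    intro i x hx
    obtain ⟨y, hy, hy'⟩ := G.pair i₀ i
    have a1 : JoinedIn (G.A0 ε) x₀ y :=
      ((str i₀).joinedIn x₀ hx₀' y (by simp [hy, hpos])).mono (sub _)
    have a2 : JoinedIn (G.A0 ε) y x :=
      ((str i).joinedIn y (by simp [hy', hpos]) x hx).mono (sub _)
    exact a1.trans a2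
  refine ⟨x₀, sub _ hx₀', ?_⟩
  rintro x (⟨i, hi⟩ | ⟨T, hT, hxT, i, hi, hb⟩)
  · exact st i x hi
  · have hxA0 : x ∈ G.A0 ε := (memA0 hg hT hxT).2 ⟨i, hi, hb⟩
    obtain ⟨j, hj, hbj⟩ : ∃ j ∈ T, G.b T j x < 2 / 5 := by
      by_contra! hcon
      have h2 : ∑ j ∈ T, G.b T j x = 1 := G.sum_one T hT x
      have h3 := Finset.card_nsmul_le_sum T _ _ hcon
      rw [G.card T hT, h2] at h3
      norm_num at h3
    have hxj : x ∈ G.A ε j := (memA hg hT hxT j).2 ⟨hj, hbj⟩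
    obtain ⟨y, hy, -⟩ := G.pair j j
    have hy' : |G.f j y| < ε := by simp [hy, hpos]
    have hc := contrR hg {j} (by simp) (by simp) True
    have hpc : IsPathConnected {x | (True → x ∈ G.A0 ε) ∧ ∀ i ∈ ({j} : Finset ι), x ∈ G.A ε i} :=
      isPathConnected_iff_pathConnectedSpace.2 inferInstance
    have hj := hpc.joinedIn y ⟨fun _ => (mem_of_strip hy').2, by
      intro i hi; rw [Finset.mem_singleton.1 hi]; exact (mem_of_strip hy').1⟩ x ⟨fun _ => hxA0, by
      intro i hi; rw [Finset.mem_singleton.1 hi]; exact hxj⟩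
    exact (st j y hy').trans (hj.mono fun z hz => hz.1 trivial)
end

end Arr

open Real in
lemma trig_I1 (α β γ x y : ℝ) :
    (x * cos α + y * sin α - sin (3 * α)) * sin (β - γ) +
    (x * cos β + y * sin β - sin (3 * β)) * sin (γ - α) +
    (x * cos γ + y * sin γ - sin (3 * γ)) * sin (α - β) =
    -4 * sin (α + β + γ) * sin (α - β) * sin (β - γ) * sin (γ - α) := by
  have key : ∀ θ : ℝ, sin (3 * θ) = 3 * sin θ * cos θ ^ 2 - sin θ ^ 3 := by
    intro θ
    rw [sin_three_mul]; linear_combination (-3 * sin θ) * sin_sq_add_cos_sq θ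
  rw [key, key, key]
  simp only [sin_sub, sin_add, cos_add]
  have ha := sin_sq_add_cos_sq α
  have hb := sin_sq_add_cos_sq β
  have hc := sin_sq_add_cos_sq γ
  generalize sin α = a at *
  generalize sin β = b at *
  generalize sin γ = c at *
  generalize cos α = a' at *
  generalize cos β = b' at *
  generalize cos γ = c' at *
  have e1 : (3 * a * a' ^ 2 - a ^ 3) * (b * c' - b' * c) =
    (3 * a * a' ^ 2 - a ^ 3) * (b * c' - b' * c) * (b ^ 2 + b' ^ 2) * (c ^ 2 + c' ^ 2) := by
    rw [hb, hc]; ring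
  have e2 : (3 * b * b' ^ 2 - b ^ 3) * (c * a' - c' * a) =
    (3 * b * b' ^ 2 - b ^ 3) * (c * a' - c' * a) * (a ^ 2 + a' ^ 2) * (c ^ 2 + c' ^ 2) := by
    rw [ha, hc]; ring
  have e3 : (3 * c * c' ^ 2 - c ^ 3) * (a * b' - a' * b) =
    (3 * c * c' ^ 2 - c ^ 3) * (a * b' - a' * b) * (b ^ 2 + b' ^ 2) * (a ^ 2 + a' ^ 2) := by
    rw [hb, ha]; ring
  linear_combination -e1 - e2 - e3

open Real in
lemma trig_sum (α β γ x y : ℝ) (hS : sin (α + β + γ) ≠ 0) (hab : sin (α - β) ≠ 0)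
    (hbc : sin (β - γ) ≠ 0) (hca : sin (γ - α) ≠ 0) :
    (x * cos α + y * sin α - sin (3 * α)) / (4 * sin (α + β + γ) * (sin (α - β) * sin (α - γ))) +
    (x * cos β + y * sin β - sin (3 * β)) / (4 * sin (α + β + γ) * (sin (β - α) * sin (β - γ))) +
    (x * cos γ + y * sin γ - sin (3 * γ)) / (4 * sin (α + β + γ) * (sin (γ - α) * sin (γ - β))) = 1 := by
  have h := trig_I1 α β γ x y
  have e1 : sin (α - γ) = - sin (γ - α) := by rw [← sin_neg]; ring_nf
  have e2 : sin (β - α) = - sin (α - β) := by rw [← sin_neg]; ring_nf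
  have e3 : sin (γ - β) = - sin (β - γ) := by rw [← sin_neg]; ring_nf
  rw [e1, e2, e3]
  generalize x * cos α + y * sin α - sin (3 * α) = X at *
  generalize x * cos β + y * sin β - sin (3 * β) = Y at *
  generalize x * cos γ + y * sin γ - sin (3 * γ) = Z at *
  generalize sin (α + β + γ) = S at *
  generalize sin (α - β) = p at *
  generalize sin (β - γ) = q at *
  generalize sin (γ - α) = r at *
  field_simp
  linear_combination -h

open Real in
lemma trig_mu (α β γ δ : ℝ) :
    sin (δ - γ) * sin (δ + β + γ) - sin (δ - α) * sin (δ + α + β) =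
      sin (α - γ) * sin (α + β + γ) := by
  have key : ∀ u v : ℝ, sin u * sin v = (cos (u - v) - cos (u + v)) / 2 := by
    intro u v; rw [cos_sub, cos_add]; ring
  rw [key, key, key]
  have e1 : cos (α - γ - (α + β + γ)) = cos (δ - γ - (δ + β + γ)) := by ring_nf
  have e2 : cos (δ - α - (δ + α + β)) = cos (α - γ + (α + β + γ)) := by
    rw [← cos_neg]; ring_nf
  have e3 : cos (δ - γ + (δ + β + γ)) = cos (δ - α + (δ + α + β)) := by ring_nf
  rw [e1, e2, e3]; ring

open Real in
lemma trig_gap (α β γ δ x y a b c : ℝ) (hab : sin (α - β) ≠ 0)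
    (ha : x * cos α + y * sin α - sin (3 * α) =
      a * (4 * sin (α + β + γ) * (sin (α - β) * sin (α - γ))))
    (hb : x * cos β + y * sin β - sin (3 * β) =
      b * (4 * sin (α + β + γ) * (sin (β - α) * sin (β - γ))))
    (hc : a + b + c = 1) :
    x * cos δ + y * sin δ - sin (3 * δ) =
      a * (4 * sin (δ - β) * sin (δ - γ) * sin (δ + β + γ)) +
      b * (4 * sin (δ - α) * sin (δ - γ) * sin (δ + α + γ)) +
      c * (4 * sin (δ - α) * sin (δ - β) * sin (δ + α + β)) := by
  have h := trig_I1 α β δ x y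
  rw [ha, hb] at h
  have m1 := trig_mu α β γ δ
  have m2 := trig_mu β α γ δ
  obtain rfl : c = 1 - a - b := by linarith
  have e2 : sin (β - α) = - sin (α - β) := by rw [← sin_neg]; ring_nf
  have e3 : sin (β - δ) = - sin (δ - β) := by rw [← sin_neg]; ring_nf
  have e4 : sin (δ + β + α) = sin (δ + α + β) := by ring_nf
  have e5 : sin (α + β + δ) = sin (δ + α + β) := by ring_nf
  have e6 : sin (β + α + γ) = sin (α + β + γ) := by ring_nf
  rw [e4, e6] at m2
  rw [e2, e3, e5] at h
  apply mul_right_cancel₀ hab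
  linear_combination h - 4 * a * sin (α - β) * sin (δ - β) * m1 - 4 * b * sin (α - β) * sin (δ - α) * m2

open Real in
lemma sin_pos_aux (m : ℕ) (hm : 0 < m) (k : ℤ) (hk : ¬ (m : ℤ) ∣ k) (h : ℝ) (h0 : |h| ≤ 1 / 2) :
    0 < sin (π * k / m) * sin (π * k / m + π * h / m) := by
  have hm' : (0 : ℝ) < m := by exact_mod_cast hm
  obtain ⟨q, r, hr0, hr1, rfl⟩ : ∃ q r : ℤ, 0 < r ∧ r < m ∧ k = q * m + r := by
    refine ⟨k / m, k % m, ?_, Int.emod_lt_of_pos _ (by exact_mod_cast hm), ?_⟩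
    · have := Int.emod_nonneg k (by exact_mod_cast hm.ne' : (m : ℤ) ≠ 0)
      have : k % m ≠ 0 := fun h => hk (Int.dvd_of_emod_eq_zero h)
      omega
    · rw [mul_comm]; exact (Int.mul_ediv_add_emod k m).symm
  have a0 : (1 : ℝ) ≤ r := by exact_mod_cast hr0
  have a1 : (r : ℝ) + 1 ≤ m := by exact_mod_cast hr1
  rw [abs_le] at h0
  have e1 : π * ((q * m + r : ℤ) : ℝ) / m = π * r / m + q * π := by push_cast; field_simp; ring
  have e2 : π * ((q * m + r : ℤ) : ℝ) / m + π * h / m = π * (r + h) / m + q * π := by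
    push_cast; field_simp; ring
  rw [e2, e1, sin_add_int_mul_pi, sin_add_int_mul_pi]
  have s1 : 0 < sin (π * r / m) := by
    apply sin_pos_of_pos_of_lt_pi
    · have : (0:ℝ) < r := by linarith
      positivity
    · rw [div_lt_iff₀ hm']; exact mul_lt_mul_of_pos_left (by linarith) pi_pos
  have s2 : 0 < sin (π * (r + h) / m) := by
    apply sin_pos_of_pos_of_lt_pi
    · have : (0:ℝ) < r + h := by linarith
      positivity
    · rw [div_lt_iff₀ hm']; exact mul_lt_mul_of_pos_left (by linarith) pi_pos
  have e3 : ((-1 : ℝ) ^ q) * ((-1 : ℝ) ^ q) = 1 := by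
    rw [← mul_zpow]; norm_num
  have : (-1 : ℝ) ^ q * sin (π * r / m) * ((-1) ^ q * sin (π * (r + h) / m)) =
      (((-1 : ℝ) ^ q) * ((-1 : ℝ) ^ q)) * (sin (π * r / m) * sin (π * (r + h) / m)) := by ring
  rw [this, e3]; positivity

open Real in
lemma sign_aux (m : ℕ) (hm : 0 < m) (N : ℕ) (hN : m ∣ N ∨ m ∣ N + 1) :
    ∃ s : ℝ, |s| = 1 ∧ ∀ k : ℤ, ¬ (m : ℤ) ∣ k →
      0 < s * sin (π * k / m) * sin (π * k / m + π * (N + 1 / 2) / m) := by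
  have hm' : (m : ℝ) ≠ 0 := by exact_mod_cast hm.ne'
  obtain ⟨z, h, hh, hz⟩ : ∃ z : ℤ, ∃ h : ℝ, |h| ≤ 1 / 2 ∧ (N : ℝ) + 1 / 2 = m * z + h := by
    rcases hN with ⟨z, hz⟩ | ⟨z, hz⟩
    · exact ⟨z, 1 / 2, by norm_num, by rw [hz]; push_cast; ring⟩
    · refine ⟨z, -1 / 2, by rw [abs_le]; norm_num, ?_⟩
      have : (N : ℝ) + 1 = m * z := by exact_mod_cast hz
      push_cast; linarith
  refine ⟨(-1) ^ z, by rw [abs_zpow]; norm_num, fun k hk => ?_⟩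
  have := sin_pos_aux m hm k hk h hh
  have e : π * k / m + π * (N + 1 / 2) / m = (π * k / m + π * h / m) + z * π := by
    rw [hz]; field_simp; ring
  rw [e, sin_add_int_mul_pi]
  have e3 : ((-1 : ℝ) ^ z) * ((-1 : ℝ) ^ z) = 1 := by
    rw [← mul_zpow]; norm_num
  calc _ < _ := this
    _ = ((-1 : ℝ) ^ z) * ((-1 : ℝ) ^ z) * (sin (π * k / m) * sin (π * k / m + π * h / m)) := by
      rw [e3, one_mul]
    _ = _ := by ring

open Real in
lemma sin_ne_aux (m : ℕ) (hm : 0 < m) (k : ℤ) (hk : ¬ (m : ℤ) ∣ k) : sin (π * k / m) ≠ 0 := by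
  have := sin_pos_aux m hm k hk 0 (by norm_num)
  intro h
  rw [h, zero_mul] at this
  exact lt_irrefl _ this

open Real in
lemma sin_half_ne (m : ℕ) (hm : 0 < m) (N : ℕ) : sin (π * (N + 1 / 2) / m) ≠ 0 := by
  have hm' : (m : ℝ) ≠ 0 := by exact_mod_cast hm.ne'
  rw [Ne, sin_eq_zero_iff]
  rintro ⟨z, hz⟩
  field_simp at hz
  have h2 : (z : ℝ) * m * 2 = 2 * N + 1 := by linarith
  have h3 : z * m * 2 = 2 * N + 1 := by exact_mod_cast h2
  omega

/-- Angles of the lines. -/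
noncomputable def th (m : ℕ) (i : Fin m) : ℝ := Real.pi * ((i : ℕ) + 1 / 6) / m

/-- Triples of lines that bound an empty triangle. -/
def triF (m : ℕ) : Finset (Finset (Fin m)) :=
  {T ∈ Finset.powersetCard 3 Finset.univ |
    m ∣ ∑ i ∈ T, (i : ℕ) ∨ m ∣ (∑ i ∈ T, (i : ℕ)) + 1}

/-- Normalising weights. -/
noncomputable def wF (m : ℕ) (T : Finset (Fin m)) (i : Fin m) : ℝ :=
  4 * Real.sin (∑ j ∈ T, th m j) * ∏ j ∈ T.erase i, Real.sin (th m i - th m j)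

lemma wF_eq {m : ℕ} {a b c : Fin m} (hab : a ≠ b) (hac : a ≠ c) (hbc : b ≠ c) :
    wF m {a, b, c} a = 4 * Real.sin (th m a + th m b + th m c) *
      (Real.sin (th m a - th m b) * Real.sin (th m a - th m c)) := by
  have e : ({a, b, c} : Finset (Fin m)).erase a = {b, c} := by
    rw [Finset.erase_insert]; simp [hab, hac]
  rw [wF, e, Finset.prod_pair hbc, Finset.sum_insert (by simp [hab, hac]), Finset.sum_pair hbc,
    add_assoc]

lemma sin_th_sub {m : ℕ} {i j : Fin m} (h : i ≠ j) : Real.sin (th m i - th m j) ≠ 0 ∧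
    ∃ k : ℤ, ¬ (m : ℤ) ∣ k ∧ th m i - th m j = Real.pi * k / m := by
  have hm : 0 < m := i.pos
  have e : th m i - th m j = Real.pi * (((i : ℕ) - (j : ℕ) : ℤ)) / m := by
    simp only [th]; push_cast; ring
  have hk : ¬ (m : ℤ) ∣ ((i : ℕ) - (j : ℕ) : ℤ) := by
    intro hd
    have h1 := i.2
    have h2 := j.2
    have h3 : ((i : ℕ) - (j : ℕ) : ℤ) = 0 :=
      Int.eq_zero_of_abs_lt_dvd hd (by rw [abs_lt]; constructor <;> omega)
    exact h (Fin.ext (by omega))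
  refine ⟨?_, _, hk, e⟩
  rw [e]
  exact sin_ne_aux m hm _ hk

lemma th_sum {m : ℕ} (a b c : Fin m) : th m a + th m b + th m c =
    Real.pi * (((a + b + c : ℕ) : ℝ) + 1 / 2) / m := by
  simp only [th]; push_cast; ring

/-- The linear forms. -/
noncomputable def lf (m : ℕ) (i : Fin m) (x : EuclideanSpace ℝ (Fin 2)) : ℝ :=
  x 0 * Real.cos (th m i) + x 1 * Real.sin (th m i) - Real.sin (3 * th m i)

lemma lf_surj {m : ℕ} {i j : Fin m} (h : i ≠ j) (u v : ℝ) : ∃ x, lf m i x = u ∧ lf m j x = v := by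
  have hs := (sin_th_sub h).1
  rw [Real.sin_sub] at hs
  set d := Real.sin (th m i) * Real.cos (th m j) - Real.cos (th m i) * Real.sin (th m j) with hd
  set u' := u + Real.sin (3 * th m i)
  set v' := v + Real.sin (3 * th m j)
  refine ⟨!₂[(v' * Real.sin (th m i) - u' * Real.sin (th m j)) / d,
    (u' * Real.cos (th m j) - v' * Real.cos (th m i)) / d], ?_, ?_⟩
  · simp only [lf, PiLp.toLp_apply, Matrix.cons_val_zero, Matrix.cons_val_one]
    field_simp
    rw [hd]; simp only [u', v']; ring
  · simp only [lf, PiLp.toLp_apply, Matrix.cons_val_zero, Matrix.cons_val_one]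
    field_simp
    rw [hd]; simp only [u', v']; ring

lemma lf_sum {m : ℕ} {a b c : Fin m} (hab : a ≠ b) (hac : a ≠ c) (hbc : b ≠ c)
    (x : EuclideanSpace ℝ (Fin 2)) :
    lf m a x / wF m {a, b, c} a + lf m b x / wF m {a, b, c} b + lf m c x / wF m {a, b, c} c = 1 ∧
    wF m {a, b, c} a ≠ 0 ∧ 
    wF m {a, b, c} b = 4 * Real.sin (th m a + th m b + th m c) *
      (Real.sin (th m b - th m a) * Real.sin (th m b - th m c)) := by
  have hm : 0 < m := a.pos
  have hS : Real.sin (th m a + th m b + th m c) ≠ 0 := by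
    rw [th_sum]; exact sin_half_ne m hm _
  have e1 : ({a, b, c} : Finset (Fin m)) = {b, a, c} := by ext; simp; tauto
  have e2 : ({a, b, c} : Finset (Fin m)) = {c, a, b} := by ext; simp; tauto
  have w1 := wF_eq hab hac hbc
  have w2 := wF_eq hab.symm hbc hac
  have w3 := wF_eq hac.symm hbc.symm hab
  rw [← e1] at w2
  rw [← e2] at w3
  have s2 : th m b + th m a + th m c = th m a + th m b + th m c := by ring
  have s3 : th m c + th m a + th m b = th m a + th m b + th m c := by ring
  rw [s2] at w2
  rw [s3] at w3
  refine ⟨?_, ?_, w2⟩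
  · rw [w1, w2, w3]
    exact trig_sum _ _ _ _ _ hS (sin_th_sub hab).1 (sin_th_sub hbc).1 (sin_th_sub hac.symm).1
  · rw [w1]
    exact mul_ne_zero (mul_ne_zero (by norm_num) hS)
      (mul_ne_zero (sin_th_sub hab).1 (sin_th_sub hac).1)

lemma mem_triF {m : ℕ} {T : Finset (Fin m)} (hT : T ∈ triF m) :
    ∃ a b c, a ≠ b ∧ a ≠ c ∧ b ≠ c ∧ T = {a, b, c} ∧
      (m ∣ (a + b + c : ℕ) ∨ m ∣ (a + b + c : ℕ) + 1) := by
  simp only [triF, Finset.mem_filter, Finset.mem_powersetCard] at hT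
  obtain ⟨a, b, c, hab, hac, hbc, rfl⟩ := Finset.card_eq_three.1 hT.1.2
  refine ⟨a, b, c, hab, hac, hbc, rfl, ?_⟩
  have h := hT.2
  rwa [Finset.sum_insert (by simp [hab, hac]), Finset.sum_pair hbc, ← add_assoc] at h

lemma lf_gap {m : ℕ} {a b c l : Fin m} (hab : a ≠ b) (hac : a ≠ c) (hbc : b ≠ c)
    (hN : m ∣ (a + b + c : ℕ) ∨ m ∣ (a + b + c : ℕ) + 1)
    (ha : l ≠ a) (hb : l ≠ b) (hc : l ≠ c) : ∃ ε > 0, ∃ s : ℝ, |s| = 1 ∧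
    ∀ x, (∀ i ∈ ({a, b, c} : Finset (Fin m)), 0 < lf m i x / wF m {a, b, c} i) →
      ε ≤ s * lf m l x := by
  have hm : 0 < m := a.pos
  obtain ⟨σ, hσ, hk⟩ := sign_aux m hm _ hN
  rw [← th_sum] at hk
  obtain ⟨na, ka, hka, ea⟩ := sin_th_sub ha
  obtain ⟨nb, kb, hkb, eb⟩ := sin_th_sub hb
  obtain ⟨nc, kc, hkc, ec⟩ := sin_th_sub hc
  have pa := hk ka hka
  have pb := hk kb hkb
  have pc := hk kc hkc
  rw [← ea] at pa
  rw [← eb] at pb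
  rw [← ec] at pc
  have ra : th m l - th m a + (th m a + th m b + th m c) = th m l + th m b + th m c := by ring
  have rb : th m l - th m b + (th m a + th m b + th m c) = th m l + th m a + th m c := by ring
  have rc : th m l - th m c + (th m a + th m b + th m c) = th m l + th m a + th m b := by ring
  rw [ra] at pa
  rw [rb] at pb
  rw [rc] at pc
  have gap := fun x : EuclideanSpace ℝ (Fin 2) => fun p q r =>
    trig_gap (th m a) (th m b) (th m c) (th m l) (x 0) (x 1) p q r (sin_th_sub hab).1
  set A := Real.sin (th m l - th m a)
  set B := Real.sin (th m l - th m b)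
  set C := Real.sin (th m l - th m c)
  set P := A * B * C with hP
  have hP0 : P ≠ 0 := mul_ne_zero (mul_ne_zero na nb) nc
  have hP1 : 0 < |P| := abs_pos.2 hP0
  set s := σ * (P / |P|) with hs
  set μa := 4 * B * C * Real.sin (th m l + th m b + th m c)
  set μb := 4 * A * C * Real.sin (th m l + th m a + th m c)
  set μc := 4 * A * B * Real.sin (th m l + th m a + th m b)
  have qa : 0 < s * μa := by
    have : s * μa = 4 * (B * C) ^ 2 / |P| * (σ * A * Real.sin (th m l + th m b + th m c)) := by
      simp only [hs, μa, hP]; ring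
    rw [this]; positivity
  have qb : 0 < s * μb := by
    have : s * μb = 4 * (A * C) ^ 2 / |P| * (σ * B * Real.sin (th m l + th m a + th m c)) := by
      simp only [hs, μb, hP]; ring
    rw [this]; positivity
  have qc : 0 < s * μc := by
    have : s * μc = 4 * (A * B) ^ 2 / |P| * (σ * C * Real.sin (th m l + th m a + th m b)) := by
      simp only [hs, μc, hP]; ring
    rw [this]; positivity
  refine ⟨min (s * μa) (min (s * μb) (s * μc)), by positivity, s, ?_, ?_⟩
  · rw [hs, abs_mul, hσ, abs_div, abs_abs, div_self hP1.ne', one_mul]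
  · intro x hx
    obtain ⟨hsum, hwa, hwb⟩ := lf_sum hab hac hbc x
    have hwb0 : wF m {a, b, c} b ≠ 0 := by
      have e1 : ({a, b, c} : Finset (Fin m)) = {b, a, c} := by ext; simp; tauto
      rw [e1]; exact (lf_sum hab.symm hbc hac x).2.1
    have h1 := hx a (by simp)
    have h2 := hx b (by simp)
    have h3 := hx c (by simp)
    set p := lf m a x / wF m {a, b, c} a with hp
    set q := lf m b x / wF m {a, b, c} b with hq
    set r := lf m c x / wF m {a, b, c} c with hr
    have g := gap x p q r (by
      have : lf m a x = p * wF m {a, b, c} a := by rw [hp, div_mul_cancel₀ _ hwa]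
      rw [wF_eq hab hac hbc] at this
      exact this) (by
      have : lf m b x = q * wF m {a, b, c} b := by rw [hq, div_mul_cancel₀ _ hwb0]
      rw [hwb] at this
      exact this) hsum
    have g' : s * lf m l x = p * (s * μa) + q * (s * μb) + r * (s * μc) := by
      rw [lf, g]; ring
    rw [g']
    set M := min (s * μa) (min (s * μb) (s * μc))
    have l1 : M ≤ s * μa := min_le_left _ _
    have l2 : M ≤ s * μb := (min_le_right _ _).trans (min_le_left _ _)
    have l3 : M ≤ s * μc := (min_le_right _ _).trans (min_le_right _ _)
    calc M = p * M + q * M + r * M := by rw [← add_mul, ← add_mul, hsum, one_mul]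
      _ ≤ _ := by gcongr

/-- The concrete arrangement. -/
noncomputable def arr (m : ℕ) (hm : 2 ≤ m) : Arr (Fin m) (EuclideanSpace ℝ (Fin 2)) where
  f := lf m
  cont i := by unfold lf; fun_prop
  aff i x y s t h := by
    simp only [lf, PiLp.add_apply, PiLp.smul_apply, smul_eq_mul]
    linear_combination (-Real.sin (3 * th m i)) * (1 - h)
  tri := triF m
  card T hT := by
    simp only [triF, Finset.mem_filter, Finset.mem_powersetCard] at hT
    exact hT.1.2
  w := wF m
  w_ne T hT i hi := by
    obtain ⟨a, b, c, hab, hac, hbc, rfl, -⟩ := mem_triF hT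
    simp only [Finset.mem_insert, Finset.mem_singleton] at hi
    rcases hi with rfl | rfl | rfl
    · exact (lf_sum hab hac hbc 0).2.1
    · have e1 : ({a, i, c} : Finset (Fin m)) = {i, a, c} := by ext; simp; tauto
      rw [e1]; exact (lf_sum hab.symm hbc hac 0).2.1
    · have e1 : ({a, b, i} : Finset (Fin m)) = {i, a, b} := by ext; simp; tauto
      rw [e1]; exact (lf_sum hac.symm hbc.symm hab 0).2.1
  sum_one T hT x := by
    obtain ⟨a, b, c, hab, hac, hbc, rfl, -⟩ := mem_triF hT
    rw [Finset.sum_insert (by simp [hab, hac]), Finset.sum_pair hbc, ← add_assoc]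
    exact (lf_sum hab hac hbc x).1
  surj T hT l hl := by
    obtain ⟨a, b, c, hab, hac, hbc, rfl, -⟩ := mem_triF hT
    rw [Finset.sum_insert (by simp [hab, hac]), Finset.sum_pair hbc, ← add_assoc] at hl
    obtain ⟨x, hx, hx'⟩ := lf_surj hab (l a * wF m {a, b, c} a) (l b * wF m {a, b, c} b)
    obtain ⟨hsum, hwa, -⟩ := lf_sum hab hac hbc x
    have hwb0 : wF m {a, b, c} b ≠ 0 := by
      have e1 : ({a, b, c} : Finset (Fin m)) = {b, a, c} := by ext; simp; tauto
      rw [e1]; exact (lf_sum hab.symm hbc hac x).2.1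
    rw [hx, hx', mul_div_cancel_right₀ _ hwa, mul_div_cancel_right₀ _ hwb0] at hsum
    refine ⟨x, fun i hi => ?_⟩
    simp only [Finset.mem_insert, Finset.mem_singleton] at hi
    rcases hi with rfl | rfl | rfl
    · rw [hx, mul_div_cancel_right₀ _ hwa]
    · rw [hx', mul_div_cancel_right₀ _ hwb0]
    · linarith
  gap T hT l hl := by
    obtain ⟨a, b, c, hab, hac, hbc, rfl, hN⟩ := mem_triF hT
    simp only [Finset.mem_insert, Finset.mem_singleton, not_or] at hl
    exact lf_gap hab hac hbc hN hl.1 hl.2.1 hl.2.2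
  pair i j := by
    by_cases h : i = j
    · subst h
      have : Nontrivial (Fin m) := Fin.nontrivial_iff_two_le.2 hm
      obtain ⟨j, hj⟩ := exists_ne i
      obtain ⟨x, hx, -⟩ := lf_surj hj.symm 0 0
      exact ⟨x, hx, hx⟩
    · exact lf_surj h 0 0
  triple i j k hij hik hjk := by
    have hm : 0 < m := i.pos
    have hS : Real.sin (th m i + th m j + th m k) ≠ 0 := by
      rw [th_sum]; exact sin_half_ne m hm _
    have hne : -4 * Real.sin (th m i + th m j + th m k) * Real.sin (th m i - th m j) *
        Real.sin (th m j - th m k) * Real.sin (th m k - th m i) ≠ 0 :=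
      mul_ne_zero (mul_ne_zero (mul_ne_zero (mul_ne_zero (by norm_num) hS)
        (sin_th_sub hij).1) (sin_th_sub hjk).1) (sin_th_sub hik.symm).1
    refine ⟨_, div_pos (abs_pos.2 hne) (by norm_num : (0:ℝ) < 3), fun x hx => ?_⟩
    have h := trig_I1 (th m i) (th m j) (th m k) (x 0) (x 1)
    rw [← h] at hx
    change |lf m i x| < |lf m i x * _ + lf m j x * _ + lf m k x * _| / 3 ∧ 
      |lf m j x| < |lf m i x * _ + lf m j x * _ + lf m k x * _| / 3 ∧
      |lf m k x| < |lf m i x * _ + lf m j x * _ + lf m k x * _| / 3 at hx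
    have bd : ∀ u v : ℝ, |u * Real.sin v| ≤ |u| := fun u v => by
      rw [abs_mul]; exact mul_le_of_le_one_right (abs_nonneg _) (Real.abs_sin_le_one v)
    have t1 := abs_add_le (lf m i x * Real.sin (th m j - th m k) +
      lf m j x * Real.sin (th m k - th m i)) (lf m k x * Real.sin (th m i - th m j))
    have t2 := abs_add_le (lf m i x * Real.sin (th m j - th m k))
      (lf m j x * Real.sin (th m k - th m i))
    have b1 := bd (lf m i x) (th m j - th m k)
    have b2 := bd (lf m j x) (th m k - th m i)
    have b3 := bd (lf m k x) (th m i - th m j)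
    linarith [hx.1, hx.2.1, hx.2.2]

lemma third_exists {m : ℕ} (hm : 2 ≤ m) (r : Bool) (i j : Fin m) :
    ∃ k : Fin m, m ∣ (i + j + k : ℕ) + (if r then 1 else 0) := by
  set e : ℕ := if r then 1 else 0 with he
  have he1 : e ≤ 1 := by rw [he]; split_ifs <;> simp
  refine ⟨⟨(3 * m - (e + i + j)) % m, Nat.mod_lt _ (by omega)⟩, ?_⟩
  have h1 := i.2
  have h2 := j.2
  have h3 : (i + j + e : ℕ) + (3 * m - (e + i + j)) = 3 * m := by omega
  have h4 : (i + j + e : ℕ) + (3 * m - (e + i + j)) % m ≡ 3 * m [MOD m] := by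
    conv_rhs => rw [← h3]
    exact Nat.ModEq.add_left _ (Nat.mod_modEq _ _)
  have h5 : m ∣ (i + j + e : ℕ) + (3 * m - (e + i + j)) % m :=
    (Nat.modEq_zero_iff_dvd).1 (h4.trans ((Nat.modEq_zero_iff_dvd).2 (Dvd.intro_left 3 rfl)))
  convert h5 using 1
  simp only; ring

lemma third_unique {m : ℕ} {u : ℕ} {k k' : Fin m} (h : m ∣ u + (k : ℕ)) (h' : m ∣ u + (k' : ℕ)) :
    k = k' := by
  have : u + (k : ℕ) ≡ u + k' [MOD m] :=
    ((Nat.modEq_zero_iff_dvd).2 h).trans ((Nat.modEq_zero_iff_dvd).2 h').symm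
  exact Fin.ext (Nat.ModEq.eq_of_lt_of_lt (Nat.ModEq.add_left_cancel' u this) k.2 k'.2)

lemma card_triF {m : ℕ} (hm : 2 ≤ m) : 2 * (m * m) ≤ 6 * (triF m).card + 6 * m := by
  classical
  choose k hk using @third_exists m hm
  let B1 : Finset (Bool × Fin m × Fin m) := Finset.univ.filter fun q => q.2.1 = q.2.2
  let B2 : Finset (Bool × Fin m × Fin m) := Finset.univ.filter fun q => k q.1 q.2.1 q.2.2 = q.2.1
  let B3 : Finset (Bool × Fin m × Fin m) := Finset.univ.filter fun q => k q.1 q.2.1 q.2.2 = q.2.2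
  let P : Finset (Bool × Fin m × Fin m) := Finset.univ.filter fun q =>
    q.2.1 ≠ q.2.2 ∧ k q.1 q.2.1 q.2.2 ≠ q.2.1 ∧ k q.1 q.2.1 q.2.2 ≠ q.2.2
  have hU : (Finset.univ : Finset (Bool × Fin m × Fin m)) ⊆ P ∪ (B1 ∪ (B2 ∪ B3)) := by
    intro q _
    simp only [P, B1, B2, B3, Finset.mem_union, Finset.mem_filter, Finset.mem_univ, true_and]
    tauto
  have cU : (Finset.univ : Finset (Bool × Fin m × Fin m)).card = 2 * (m * m) := by
    simp [Finset.card_univ]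
  have cBF : (Finset.univ : Finset (Bool × Fin m)).card = 2 * m := by
    simp [Finset.card_univ]
  have c1 : B1.card ≤ 2 * m := by
    rw [← cBF]
    refine Finset.card_le_card_of_injOn (fun q => (q.1, q.2.1)) (fun _ _ => Finset.mem_univ _) ?_
    rintro ⟨r, i, j⟩ h ⟨r', i', j'⟩ h' e
    simp only [B1, Finset.coe_filter, Finset.mem_univ, true_and, Set.mem_ofPred_eq] at h h'
    simp only [Prod.mk.injEq] at e ⊢
    exact ⟨e.1, e.2, by rw [← h, ← h', e.2]⟩
  have c2 : B2.card ≤ 2 * m := by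
    rw [← cBF]
    refine Finset.card_le_card_of_injOn (fun q => (q.1, q.2.1)) (fun _ _ => Finset.mem_univ _) ?_
    rintro ⟨r, i, j⟩ h ⟨r', i', j'⟩ h' e
    simp only [B2, Finset.coe_filter, Finset.mem_univ, true_and, Set.mem_ofPred_eq] at h h'
    simp only [Prod.mk.injEq] at e ⊢
    obtain ⟨rfl, rfl⟩ := e
    have a := hk r i j
    have a' := hk r i j'
    rw [h] at a
    rw [h'] at a'
    refine ⟨rfl, rfl, third_unique (u := (i + i : ℕ) + (if r then 1 else 0)) ?_ ?_⟩
    · convert a using 1; ring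
    · convert a' using 1; ring
  have c3 : B3.card ≤ 2 * m := by
    rw [← cBF]
    refine Finset.card_le_card_of_injOn (fun q => (q.1, q.2.2)) (fun _ _ => Finset.mem_univ _) ?_
    rintro ⟨r, i, j⟩ h ⟨r', i', j'⟩ h' e
    simp only [B3, Finset.coe_filter, Finset.mem_univ, true_and, Set.mem_ofPred_eq] at h h'
    simp only [Prod.mk.injEq] at e ⊢
    obtain ⟨rfl, rfl⟩ := e
    have a := hk r i j
    have a' := hk r i' j
    rw [h] at a
    rw [h'] at a'
    refine ⟨rfl, third_unique (u := (j + j : ℕ) + (if r then 1 else 0)) ?_ ?_, rfl⟩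
    · convert a using 1; ring
    · convert a' using 1; ring
  have cP : P.card ≤ 6 * (triF m).card := by
    refine Finset.card_le_mul_card_image_of_maps_to
      (f := fun q : Bool × Fin m × Fin m => ({q.2.1, q.2.2, k q.1 q.2.1 q.2.2} : Finset (Fin m)))
      ?_ 6 ?_
    · rintro ⟨r, i, j⟩ h
      simp only [P, Finset.mem_filter, Finset.mem_univ, true_and] at h
      have hc : ({i, j, k r i j} : Finset (Fin m)).card = 3 :=
        Finset.card_eq_three.2 ⟨_, _, _, h.1, h.2.1.symm, h.2.2.symm, rfl⟩
      have a := hk r i j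
      simp only [triF, Finset.mem_filter, Finset.mem_powersetCard]
      refine ⟨⟨Finset.subset_univ _, hc⟩, ?_⟩
      rw [Finset.sum_insert (by simp [h.1, h.2.1.symm]), Finset.sum_pair h.2.2.symm, ← add_assoc]
      cases r
      · left; simpa using a
      · right; simpa using a
    · intro T hT
      have hT3 : T.card = 3 := by
        simp only [triF, Finset.mem_filter, Finset.mem_powersetCard] at hT
        exact hT.1.2
      have : T.offDiag.card = 6 := by rw [Finset.offDiag_card, hT3]
      rw [← this]
      refine Finset.card_le_card_of_injOn (fun q => q.2) ?_ ?_
      · rintro ⟨r, i, j⟩ h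
        simp only [P, Finset.coe_filter, Finset.mem_filter, Finset.mem_univ, true_and,
          Set.mem_ofPred_eq] at h
        rw [Finset.mem_coe, Finset.mem_offDiag]
        rw [← h.2]
        exact ⟨by simp, by simp, h.1.1⟩
      · rintro ⟨r, i, j⟩ h ⟨r', i', j'⟩ h' e
        simp only [Prod.mk.injEq] at e
        obtain ⟨rfl, rfl⟩ := e
        simp only [P, Finset.coe_filter, Finset.mem_filter, Finset.mem_univ, true_and,
          Set.mem_ofPred_eq] at h h'
        have s : ∀ r, (i ≠ j ∧ k r i j ≠ i ∧ k r i j ≠ j) ∧ {i, j, k r i j} = T →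
            m ∣ (∑ l ∈ T, (l : ℕ)) + (if r then 1 else 0) := by
          rintro r ⟨hh, hTe⟩
          rw [← hTe, Finset.sum_insert (by simp [hh.1, hh.2.1.symm]), Finset.sum_pair hh.2.2.symm,
            ← add_assoc]
          exact hk r i j
        have s1 := s r h
        have s2 := s r' h'
        have hr : r = r' := by
          have hnd : ∀ N : ℕ, m ∣ N → m ∣ N + 1 → False := by
            intro N a b
            have := (Nat.dvd_add_right a).1 b
            have := Nat.le_of_dvd one_pos this
            omega
          cases r <;> cases r' <;> simp at s1 s2 ⊢
          · exact hnd _ s1 s2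
          · exact hnd _ s2 s1
        rw [hr]
  have := Finset.card_le_card hU
  have u1 := Finset.card_union_le P (B1 ∪ (B2 ∪ B3))
  have u2 := Finset.card_union_le B1 (B2 ∪ B3)
  have u3 := Finset.card_union_le B2 B3
  omega

/-- Bookkeeping: from the arrangement to the family indexed by `Fin (m + 1)`. -/
lemma final_aux (m : ℕ) (hm : 5 ≤ m) :
    ∃ A : Fin (m + 1) → Set (EuclideanSpace ℝ (Fin 2)),
      (∀ i, IsOpen (A i)) ∧
      (∀ σ : Finset (Fin (m + 1)), σ.Nonempty →
        (⋂ i ∈ σ, A i) = ∅ ∨ IsPathConnected (⋂ i ∈ σ, A i)) ∧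
      fNum A 3 = 0 ∧
      m.choose 2 + (triF m).card ≤ fNum A 2 ∧
      (∃ i₀ : Fin (m + 1), ∀ i : Fin (m + 1), i ≠ i₀ → ContractibleSpace ↥(A i)) ∧
      (∀ σ : Finset (Fin (m + 1)), σ.card = 2 ∨ σ.card = 3 → (⋂ i ∈ σ, A i).Nonempty →
        ContractibleSpace ↥(⋂ i ∈ σ, A i)) := by
  classical
  let G := arr m (by omega)
  have : Nonempty (Fin m) := ⟨⟨0, by omega⟩⟩
  obtain ⟨ε, hg⟩ := G.exists_good
  let A : Fin (m + 1) → Set (EuclideanSpace ℝ (Fin 2)) := Fin.cons (G.A0 ε) (G.A ε)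
  let R : Finset (Fin (m + 1)) → Finset (Fin m) := fun σ => Finset.univ.filter fun i => i.succ ∈ σ
  have hInt : ∀ σ, (⋂ i ∈ σ, A i) = {x | (0 ∈ σ → x ∈ G.A0 ε) ∧ ∀ i ∈ R σ, x ∈ G.A ε i} := by
    intro σ
    ext x
    simp only [Set.mem_iInter, Set.mem_ofPred_eq, R, Finset.mem_filter, Finset.mem_univ, true_and]
    constructor
    · intro h
      exact ⟨fun h0 => h 0 h0, fun i hi => h i.succ hi⟩
    · rintro ⟨h0, h1⟩ i
      refine Fin.cases ?_ ?_ i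
      · exact fun h => h0 h
      · exact fun i h => h1 i h
  have hσ : ∀ σ : Finset (Fin (m + 1)), σ = (if 0 ∈ σ then {0} else ∅) ∪ (R σ).map (Fin.succEmb m) := by
    intro σ
    ext i
    refine Fin.cases ?_ ?_ i
    · by_cases h : (0 : Fin (m + 1)) ∈ σ <;> simp [h, Fin.succ_ne_zero]
    · intro i
      by_cases h : (0 : Fin (m + 1)) ∈ σ <;> simp [h, R, Fin.succ_ne_zero]
  have hcard : ∀ σ : Finset (Fin (m + 1)), σ.card = (if 0 ∈ σ then 1 else 0) + (R σ).card := by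
    intro σ
    conv_lhs => rw [hσ σ]
    rw [Finset.card_union_of_disjoint, Finset.card_map]
    · split_ifs <;> simp
    · split_ifs <;> simp [Finset.disjoint_left, Fin.succ_ne_zero]
  have h4 : ∀ σ : Finset (Fin (m + 1)), 4 ≤ σ.card → (⋂ i ∈ σ, A i) = ∅ := by
    intro σ h
    rw [Set.eq_empty_iff_forall_notMem]
    intro x hx
    rw [hInt] at hx
    have hc := hcard σ
    have h3 : 3 ≤ (R σ).card := by split_ifs at hc <;> omega
    obtain ⟨hR, -, -, hA0⟩ := Arr.triple_sub hg h3 hx.2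
    have := G.card _ hR
    split_ifs at hc with h0
    · exact hA0 (hx.1 h0)
    · omega
  have h12 : ∀ σ : Finset (Fin (m + 1)), 1 ≤ (R σ).card → (R σ).card ≤ 2 →
      ContractibleSpace ↥(⋂ i ∈ σ, A i) := by
    intro σ h1 h2
    rw [hInt]
    exact Arr.contrR hg (R σ) h1 h2 _
  have h23 : ∀ σ : Finset (Fin (m + 1)), σ.card = 2 ∨ σ.card = 3 → (⋂ i ∈ σ, A i).Nonempty →
        ContractibleSpace ↥(⋂ i ∈ σ, A i) := by
    intro σ h hne
    have hc := hcard σ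
    by_cases hR : (R σ).card ≤ 2
    · exact h12 σ (by split_ifs at hc <;> omega) hR
    · have h0 : 0 ∉ σ := by
        intro h0; rw [if_pos h0] at hc; omega
      rw [hInt] at hne ⊢
      obtain ⟨x, hx⟩ := hne
      have := (Arr.triple_sub hg (by omega) hx.2).1
      have e : {x | (0 ∈ σ → x ∈ G.A0 ε) ∧ ∀ i ∈ R σ, x ∈ G.A ε i} =
          {x | ∀ i ∈ R σ, x ∈ G.A ε i} := by
        ext x; simp [h0]
      rw [e]
      exact Arr.contr3 hg this
  refine ⟨A, ?_, ?_, ?_, ?_, ?_, h23⟩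
  · intro i
    refine Fin.cases ?_ ?_ i
    · exact G.A0_open ε
    · exact G.A_open ε
  · intro σ hne
    by_cases hemp : (⋂ i ∈ σ, A i) = ∅
    · exact Or.inl hemp
    right
    have hne' := Set.nonempty_iff_ne_empty.2 hemp
    have hpos := Finset.card_pos.2 hne
    have hc := hcard σ
    by_cases hR : (R σ).card = 0
    · have h0 : 0 ∈ σ := by
        by_contra h0
        rw [if_neg h0] at hc
        omega
      have e : (⋂ i ∈ σ, A i) = G.A0 ε := by
        rw [hInt, Finset.card_eq_zero.1 hR]
        ext x; simp [h0]
      rw [e]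
      exact Arr.A0_path hg
    · have : ContractibleSpace ↥(⋂ i ∈ σ, A i) := by
        by_cases h1 : (R σ).card ≤ 2
        · exact h12 σ (by omega) h1
        · refine h23 σ ?_ hne'
          by_contra hcon
          exact hemp (h4 σ (by omega))
      exact isPathConnected_iff_pathConnectedSpace.2 inferInstance
  · rw [fNum, Nat.card_eq_zero]
    left
    constructor
    rintro ⟨σ, h1, h2⟩
    rw [h4 σ (by omega)] at h2
    exact Set.not_nonempty_empty h2
  · let F1 : Finset (Finset (Fin (m + 1))) :=
      (Finset.powersetCard 2 (Finset.univ : Finset (Fin m))).image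
        fun S => insert 0 (S.map (Fin.succEmb m))
    let F2 : Finset (Finset (Fin (m + 1))) := (triF m).image fun S => S.map (Fin.succEmb m)
    have n0 : ∀ S : Finset (Fin m), 0 ∉ S.map (Fin.succEmb m) := by
      intro S; simp [Fin.succ_ne_zero]
    have c1 : F1.card = m.choose 2 := by
      rw [Finset.card_image_of_injective, Finset.card_powersetCard, Finset.card_univ,
        Fintype.card_fin]
      intro S S' h
      have := congrArg (fun s => Finset.erase s 0) h
      simp only [Finset.erase_insert (n0 _)] at this
      exact Finset.map_injective _ this
    have c2 : F2.card = (triF m).card :=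
      Finset.card_image_of_injective _ (Finset.map_injective _)
    have hdis : Disjoint F1 F2 := by
      rw [Finset.disjoint_left]
      intro S h1 h2
      obtain ⟨S1, -, rfl⟩ := Finset.mem_image.1 h1
      obtain ⟨S2, -, h⟩ := Finset.mem_image.1 h2
      exact n0 S2 (by rw [h]; simp)
    have hR1 : ∀ S, R (S.map (Fin.succEmb m)) = S := by
      intro S; ext i; simp [R]
    have hR2 : ∀ S, R (insert 0 (S.map (Fin.succEmb m))) = S := by
      intro S; ext i; simp [R, Fin.succ_ne_zero]
    have hsub : ∀ σ ∈ F1 ∪ F2, σ.card = 2 + 1 ∧ (⋂ i ∈ σ, A i).Nonempty := by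
      intro σ h
      rcases Finset.mem_union.1 h with h | h
      · obtain ⟨S, hS, rfl⟩ := Finset.mem_image.1 h
        have hS2 := (Finset.mem_powersetCard.1 hS).2
        refine ⟨by rw [Finset.card_insert_of_notMem (n0 S), Finset.card_map, hS2], ?_⟩
        have := h12 (insert 0 (S.map (Fin.succEmb m))) (by rw [hR2]; omega) (by rw [hR2]; omega)
        exact Set.nonempty_coe_sort.1 inferInstance
      · obtain ⟨S, hS, rfl⟩ := Finset.mem_image.1 h
        refine ⟨by rw [Finset.card_map]; exact G.card S hS, ?_⟩
        obtain ⟨x, hx⟩ := Arr.triple_ne hg hS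
        refine ⟨x, ?_⟩
        rw [hInt, hR1]
        exact ⟨fun h => absurd h (n0 S), hx⟩
    rw [← c1, ← c2, ← Finset.card_union_of_disjoint hdis, fNum, Nat.card_eq_fintype_card,
      Fintype.card_subtype]
    exact Finset.card_le_card fun σ h => Finset.mem_filter.2 ⟨Finset.mem_univ _, hsub σ h⟩
  · refine ⟨0, fun i => Fin.cases (fun h => absurd rfl h) (fun i _ => ?_) i⟩
    have e : A i.succ = ⋂ j ∈ ({i.succ} : Finset (Fin (m + 1))), A j := by simp
    have hR : R {i.succ} = {i} := by ext j; simp [R]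
    rw [e]
    exact h12 {i.succ} (by rw [hR]; simp) (by rw [hR]; simp)

/-- **Theorem (construction).** For every `n ≥ 6` there is a family `𝒜` of `n` open sets
in `ℝ²` with all nonempty subfamily intersections path-connected, `f_3(𝒜) = 0`,
`f_2(𝒜) ≥ C(n-1,2) + (n²-6n+3)/3`, all but one of the sets contractible, and all
nonempty intersections of pairs and triples contractible. -/
theorem construction_lower_bound (n : ℕ) (hn : 6 ≤ n) :
    ∃ A : Fin n → Set (EuclideanSpace ℝ (Fin 2)),
      (∀ i, IsOpen (A i)) ∧
      (∀ σ : Finset (Fin n), σ.Nonempty →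
        (⋂ i ∈ σ, A i) = ∅ ∨ IsPathConnected (⋂ i ∈ σ, A i)) ∧
      fNum A 3 = 0 ∧
      (((n - 1).choose 2 : ℝ) + ((n : ℝ) ^ 2 - 6 * n + 3) / 3 ≤ (fNum A 2 : ℝ)) ∧
      (∃ i₀ : Fin n, ∀ i : Fin n, i ≠ i₀ → ContractibleSpace ↥(A i)) ∧
      (∀ σ : Finset (Fin n), σ.card = 2 ∨ σ.card = 3 → (⋂ i ∈ σ, A i).Nonempty →
        ContractibleSpace ↥(⋂ i ∈ σ, A i)) := by
  obtain ⟨m, rfl⟩ : ∃ m, n = m + 1 := ⟨n - 1, by omega⟩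
  obtain ⟨A, h1, h2, h3, h4, h5, h6⟩ := final_aux m (by omega)
  refine ⟨A, h1, h2, h3, ?_, h5, h6⟩
  have hc := card_triF (m := m) (by omega)
  have hc' : (2 : ℝ) * (m * m) ≤ 6 * (triF m).card + 6 * m := by exact_mod_cast hc
  have h4' : (m.choose 2 : ℝ) + (triF m).card ≤ fNum A 2 := by exact_mod_cast h4
  rw [Nat.add_sub_cancel]
  push_cast
  nlinarith
end
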